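/- Let ψ be an approximation function with ψ(q) < 1/2 for all q, satisfying ψ(q) = O((q (log log q)²)⁻¹) and ∑_q ψ(q) = ∞. Then for every tamely Liouville irrational number γ, the set W(ψ,γ) has Lebesgue measure one. -/

import Mathlib

open MeasureTheory Filter Real

/-- Distance from a real number to the nearest integer. -/
noncomputable def dnint (x : ℝ) : ℝ := |x - round x|

/-- The inhomogeneous approximation set `W(ψ,γ)`. -/
noncomputable def W (ψ : ℕ → ℝ) (γ : ℝ) : Set ℝ :=
  {x ∈ Set.Icc (0:ℝ) 1 | {q : ℕ | 0 < q ∧ dnint (q * x - γ) < ψ q}.Infinite}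

/-- `σ_γ(Q)`: the infimum of all `σ > 0` with `‖qγ‖ ≥ q^{-σ}` for all `2 ≤ q ≤ Q`. -/
noncomputable def sigmaExp (γ : ℝ) (Q : ℕ) : ℝ :=
  sInf {σ : ℝ | 0 < σ ∧ ∀ q : ℕ, 2 ≤ q → q ≤ Q → (q : ℝ) ^ (-σ) ≤ dnint (q * γ)}

/-- `γ` is tamely Liouville if `σ_γ(Q) ≤ C (log₂ Q)^{1/4-ε}` for all `Q ≥ 2`. -/
def TamelyLiouville (γ : ℝ) : Prop :=
  ∃ ε > (0:ℝ), ∃ C > (0:ℝ), ∀ Q : ℕ, 2 ≤ Q →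
    sigmaExp γ Q ≤ C * (Real.logb 2 Q) ^ ((1:ℝ)/4 - ε)


open scoped Classical in
lemma count_ap (y a : ℝ) (ha : 0 ≤ a) (p : ℤ) (n : ℕ) (hn : 0 < n) :
    (((Finset.range n).filter (fun k : ℕ => dnint (y + p * k / n) < a)).card : ℝ)
      ≤ 2 * a * n + Int.gcd p n := by
  set d := Int.gcd p n with hd
  have hdpos : 0 < d := Int.gcd_pos_of_ne_zero_right _ (by exact_mod_cast hn.ne')
  obtain ⟨p', hp'⟩ : (d:ℤ) ∣ p := Int.gcd_dvd_left ..
  obtain ⟨n', hn'⟩ : d ∣ n := by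
    have := Int.gcd_dvd_right p (n:ℤ)
    exact_mod_cast this
  have hn'pos : 0 < n' := Nat.pos_of_ne_zero (by rintro rfl; simp at hn'; omega)
  have hcop : IsCoprime p' (n':ℤ) := by
    rw [Int.isCoprime_iff_gcd_eq_one]
    have h1 : Int.gcd p n = d * Int.gcd p' n' := by
      rw [hp', hn']; push_cast
      rw [Int.gcd_mul_left]; simp
    rw [← hd] at h1
    have : d * 1 = d * Int.gcd p' n' := by omega
    exact (Nat.eq_of_mul_eq_mul_left hdpos this).symm
  set s := (Finset.range n).filter (fun k : ℕ => dnint (y + p * k / n) < a) with hs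
  let f : ℕ → ℤ := fun k => p' * k - n' * round (y + p * k / n)
  have hn'R : (0:ℝ) < n' := by exact_mod_cast hn'pos
  have hdR : (0:ℝ) < d := by exact_mod_cast hdpos
  have hfrac : ∀ k : ℕ, (p:ℝ) * k / n = p' * k / n' := by
    intro k
    rw [hp', hn']; push_cast; field_simp
  have hfib : ∀ b ∈ s.image f, (s.filter (fun k => f k = b)).card ≤ d := by
    intro b _
    have : (s.filter (fun k => f k = b)).card ≤ (Finset.range d).card := by
      apply Finset.card_le_card_of_injOn (fun k => k / n')
      · intro k hk
        simp only [hs, Finset.coe_filter, Finset.mem_filter, Finset.mem_range, Set.mem_ofPred_eq] at hk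
        simp only [Finset.coe_range, Set.mem_Iio]
        rw [Nat.div_lt_iff_lt_mul hn'pos]
        rw [← hn']; exact hk.1.1
      · intro k hk l hl hkl
        simp only [hs, Finset.coe_filter, Finset.mem_filter, Finset.mem_range, Set.mem_ofPred_eq] at hk hl
        have h1 : f k = f l := by rw [hk.2, hl.2]
        have h2 : (n':ℤ) ∣ p' * ((k:ℤ) - l) := by
          refine ⟨round (y + p * k / n) - round (y + p * l / n), ?_⟩
          simp only [f] at h1
          linarith
        have h3 : (n':ℤ) ∣ (k:ℤ) - l := hcop.symm.dvd_of_dvd_mul_left h2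
        have h4 : k % n' = l % n' := by
          have h5 : (k:ℤ) % n' = l % n' := Int.ModEq.symm ((Int.modEq_iff_dvd).2 h3)
          exact_mod_cast h5
        simp only at hkl
        rw [← Nat.div_add_mod k n', ← Nat.div_add_mod l n', hkl, h4]
    simpa using this
  have hcard := Finset.card_le_mul_card_image (f := f) s d hfib
  have himg : s.image f ⊆ Finset.Ioo ⌊-(n':ℝ) * y - a * n'⌋ ⌈-(n':ℝ) * y + a * n'⌉ := by
    intro b hb
    obtain ⟨k, hk, rfl⟩ := Finset.mem_image.1 hb
    simp only [hs, Finset.mem_filter, dnint, hfrac] at hk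
    have h1 := abs_lt.1 hk.2
    rw [Finset.mem_Ioo, Int.floor_lt, Int.lt_ceil]
    simp only [f, hfrac]
    push_cast
    have e : (p':ℝ) * k = (p' * k / n') * n' := by field_simp
    set w : ℝ := p' * k / n'
    set R : ℤ := round (y + w)
    rw [e]
    constructor
    · nlinarith
    · nlinarith
  have hc2 := Finset.card_le_card himg
  rw [Int.card_Ioo] at hc2
  have hc3 : ((⌈-(n':ℝ) * y + a * n'⌉ - ⌊-(n':ℝ) * y - a * n'⌋ - 1).toNat : ℝ) ≤ 2 * a * n' + 1 := by
    have h1 := Int.ceil_lt_add_one (-(n':ℝ) * y + a * n')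
    have h2 := Int.lt_floor_add_one (-(n':ℝ) * y - a * n')
    rcases le_total 0 (⌈-(n':ℝ) * y + a * n'⌉ - ⌊-(n':ℝ) * y - a * n'⌋ - 1) with h | h
    · have : ((⌈-(n':ℝ) * y + a * n'⌉ - ⌊-(n':ℝ) * y - a * n'⌋ - 1).toNat : ℝ) = ((⌈-(n':ℝ) * y + a * n'⌉ - ⌊-(n':ℝ) * y - a * n'⌋ - 1 : ℤ) : ℝ) := by
        exact_mod_cast Int.toNat_of_nonneg h
      rw [this]; push_cast; linarith
    · rw [Int.toNat_of_nonpos h]; push_cast; positivity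
  have hc4 : ((s.image f).card : ℝ) ≤ 2 * a * n' + 1 := le_trans (by exact_mod_cast hc2) hc3
  calc (s.card : ℝ) ≤ d * (s.image f).card := by exact_mod_cast hcard
    _ ≤ d * (2 * a * n' + 1) := by gcongr
    _ = 2 * a * n + d := by rw [hn']; push_cast; ring

lemma dnint_eq_norm (x : ℝ) : dnint x = ‖(x : UnitAddCircle)‖ := by
  rw [UnitAddCircle.norm_eq, dnint]

def Bset (γ a : ℝ) (q : ℕ) : Set UnitAddCircle := {x | ‖q • x - (γ : UnitAddCircle)‖ < a}

lemma Bset_open (γ a : ℝ) (q : ℕ) : IsOpen (Bset γ a q) := by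
  unfold Bset
  exact isOpen_lt (by fun_prop) continuous_const

lemma Bset_meas (γ a : ℝ) (q : ℕ) : MeasurableSet (Bset γ a q) := (Bset_open γ a q).measurableSet

lemma mp_nsmul (q : ℕ) (hq : 0 < q) : MeasurePreserving (fun y : UnitAddCircle => q • y) := by
  rcases Nat.lt_or_ge 1 q with h | h
  · exact (AddCircle.ergodic_nsmul h).toMeasurePreserving
  · have : q = 1 := by omega
    subst this
    simp only [one_smul]
    exact MeasurePreserving.id _

lemma Bset_vol (γ a : ℝ) (ha : 0 ≤ a) (ha2 : a < 1/2) (q : ℕ) (hq : 0 < q) :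
    volume (Bset γ a q) = ENNReal.ofReal (2 * a) := by
  have h1 : Bset γ a q = (fun y : UnitAddCircle => q • y) ⁻¹' (Metric.ball (γ : UnitAddCircle) a) := by
    ext x; simp [Bset, dist_eq_norm]
  rw [h1, (mp_nsmul q hq).measure_preimage Metric.isOpen_ball.measurableSet.nullMeasurableSet]
  have h2 : volume (Metric.ball (γ : UnitAddCircle) a) = volume (Metric.closedBall (γ : UnitAddCircle) a) :=
    measure_congr AddCircle.closedBall_ae_eq_ball.symm
  rw [h2, AddCircle.volume_closedBall, min_eq_right (by linarith)]

open scoped Classical in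
lemma count_circle (x : UnitAddCircle) (γ a : ℝ) (ha : 0 ≤ a) (q r : ℕ) (hr : 0 < r) :
    (((Finset.range r).filter (fun k : ℕ => x + (((k:ℝ)/r : ℝ) : UnitAddCircle) ∈ Bset γ a q)).card : ℝ)
      ≤ 2 * a * r + Nat.gcd q r := by
  obtain ⟨x, rfl⟩ := QuotientAddGroup.mk_surjective x
  have := count_ap (q * x - γ) a ha q r hr
  rw [Int.gcd_natCast_natCast] at this
  convert this using 4 with k
  rw [Bset, dnint_eq_norm, Set.mem_ofPred_eq]
  have : q • ((QuotientAddGroup.mk x : UnitAddCircle) + (((k:ℝ)/r : ℝ) : UnitAddCircle)) - (γ : UnitAddCircle)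
     = ((q * x - γ + (q:ℤ) * k / r : ℝ) : UnitAddCircle) := by
    have e : (q * x - γ + (q:ℤ) * k / r : ℝ) = q • (x + k / r) - γ := by
      simp; ring
    rw [e, AddCircle.coe_sub, AddCircle.coe_nsmul, AddCircle.coe_add]
  rw [this]

lemma Bset_shift (x : UnitAddCircle) (γ b : ℝ) (r : ℕ) (hr : 0 < r) (k : ℕ) :
    x + (((k:ℝ)/r : ℝ) : UnitAddCircle) ∈ Bset γ b r ↔ x ∈ Bset γ b r := by
  have hr' : (r:ℝ) ≠ 0 := by exact_mod_cast hr.ne'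
  have : r • (((k:ℝ)/r : ℝ) : UnitAddCircle) = 0 := by
    rw [← AddCircle.coe_nsmul, nsmul_eq_mul, mul_div_cancel₀ _ hr', AddCircle.coe_eq_zero_iff]
    exact ⟨k, by simp⟩
  simp only [Bset, Set.mem_ofPred_eq, smul_add, this, add_zero]

lemma inter_bound (γ a b : ℝ) (ha : 0 ≤ a) (hb : 0 ≤ b) (hb2 : b < 1/2) (q r : ℕ) (hr : 0 < r) :
    volume.real (Bset γ a q ∩ Bset γ b r) ≤ 4 * a * b + 2 * (Nat.gcd q r) * (b / r) := by
  classical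
  set g : ℕ → UnitAddCircle := fun k => (((k:ℝ)/r : ℝ) : UnitAddCircle)
  let E : ℕ → Set UnitAddCircle := fun k => (fun x => x + g k) ⁻¹' (Bset γ a q)
  have hE : ∀ k, MeasurableSet (E k) := fun k =>
    (measurable_add_const (g k)) (Bset_meas γ a q)
  have h1 : ∀ k, volume (Bset γ a q ∩ Bset γ b r) = volume (E k ∩ Bset γ b r) := by
    intro k
    have : E k ∩ Bset γ b r = (fun x => x + g k) ⁻¹' (Bset γ a q ∩ Bset γ b r) := by
      ext x
      simp only [E, Set.mem_inter_iff, Set.mem_preimage]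
      rw [show x + g k ∈ Bset γ b r ↔ x ∈ Bset γ b r from Bset_shift x γ b r hr k]
    rw [this, measure_preimage_add_right]
  have h2 : (r : ENNReal) * volume (Bset γ a q ∩ Bset γ b r) ≤
      ENNReal.ofReal (2 * a * r + Nat.gcd q r) * volume (Bset γ b r) := by
    calc (r : ENNReal) * volume (Bset γ a q ∩ Bset γ b r)
        = ∑ k ∈ Finset.range r, volume (E k ∩ Bset γ b r) := by
          rw [Finset.sum_congr rfl (fun k _ => (h1 k).symm)]; simp
      _ = ∑ k ∈ Finset.range r, ∫⁻ x in Bset γ b r, (E k).indicator 1 x := by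
          refine Finset.sum_congr rfl (fun k _ => ?_)
          rw [lintegral_indicator_one (hE k), Measure.restrict_apply (hE k)]
      _ = ∫⁻ x in Bset γ b r, ∑ k ∈ Finset.range r, (E k).indicator 1 x := by
          rw [lintegral_finsetSum]
          intro k _
          exact measurable_one.indicator (hE k)
      _ ≤ ∫⁻ x in Bset γ b r, ENNReal.ofReal (2 * a * r + Nat.gcd q r) := by
          refine lintegral_mono (fun x => ?_)
          have := count_circle x γ a ha q r hr
          have e : ∑ k ∈ Finset.range r, (E k).indicator (1 : UnitAddCircle → ENNReal) x
              = (((Finset.range r).filter (fun k : ℕ => x + g k ∈ Bset γ a q)).card : ENNReal) := by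
            simp [Set.indicator_apply, E]
          rw [e, ← ENNReal.ofReal_natCast]
          exact ENNReal.ofReal_le_ofReal this
      _ = _ := by simp
  rw [Bset_vol γ b hb hb2 r hr] at h2
  have hr' : (0:ℝ) < r := by exact_mod_cast hr
  have h3 := ENNReal.toReal_mono (by finiteness) h2
  rw [ENNReal.toReal_mul, ENNReal.toReal_mul, ENNReal.toReal_ofReal (by positivity),
    ENNReal.toReal_ofReal (by positivity), ENNReal.toReal_natCast] at h3
  rw [measureReal_def]
  have : (2 * a * r + Nat.gcd q r) * (2 * b) = r * (4 * a * b + 2 * (Nat.gcd q r) * (b / r)) := by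
    field_simp; ring
  rw [this] at h3
  exact le_of_mul_le_mul_left h3 hr'

lemma inter_empty (γ a b : ℝ) (d q' r' : ℕ) (hle : r' ≤ q') (hd : 0 < d) (hq : 0 < q')
    (h : r' * a + q' * b ≤ dnint (((q' - r' : ℕ) : ℝ) * γ)) :
    Bset γ a (d * q') ∩ Bset γ b (d * r') = ∅ := by
  rw [Set.eq_empty_iff_forall_notMem]
  rintro x ⟨h1, h2⟩
  simp only [Bset, Set.mem_ofPred_eq] at h1 h2
  rw [dnint_eq_norm] at h
  have e : ((((q' - r' : ℕ) : ℝ) * γ : ℝ) : UnitAddCircle)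
      = r' • ((d * q') • x - (γ : UnitAddCircle)) - q' • ((d * r') • x - (γ : UnitAddCircle)) := by
    rw [← nsmul_eq_mul, AddCircle.coe_nsmul, sub_nsmul _ hle]
    simp only [smul_sub, smul_smul]
    rw [show r' * (d * q') = q' * (d * r') by ring]
    abel
  rw [e] at h
  have h3 : ‖r' • ((d * q') • x - (γ : UnitAddCircle)) - q' • ((d * r') • x - (γ : UnitAddCircle))‖
      ≤ r' * ‖(d * q') • x - (γ : UnitAddCircle)‖ + q' * ‖(d * r') • x - (γ : UnitAddCircle)‖ :=
    (norm_sub_le _ _).trans (add_le_add (norm_nsmul_le) (norm_nsmul_le))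
  have hq' : (0:ℝ) < q' := by exact_mod_cast hq
  have h4 : (q':ℝ) * ‖(d * r') • x - (γ : UnitAddCircle)‖ < q' * b := by gcongr
  have h5 : (r':ℝ) * ‖(d * q') • x - (γ : UnitAddCircle)‖ ≤ r' * a := by gcongr
  linarith

lemma bc_variance {Ω : Type*} [MeasurableSpace Ω] (μ : Measure Ω) [IsProbabilityMeasure μ]
    (A : ℕ → Set Ω) (hA : ∀ q, MeasurableSet (A q)) (K : ℝ)
    (h : ∀ Q : ℕ, ∑ q ∈ Finset.Icc 1 Q, ∑ r ∈ Finset.Icc 1 Q, μ.real (A q ∩ A r)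
      ≤ (∑ q ∈ Finset.Icc 1 Q, μ.real (A q)) ^ 2 + K * ∑ q ∈ Finset.Icc 1 Q, μ.real (A q))
    (hdiv : Tendsto (fun Q : ℕ => ∑ q ∈ Finset.Icc 1 Q, μ.real (A q)) atTop atTop) :
    ∀ᵐ x ∂μ, {q : ℕ | 0 < q ∧ x ∈ A q}.Infinite := by
  classical
  set P : ℕ → ℝ := fun Q => ∑ q ∈ Finset.Icc 1 Q, μ.real (A q) with hP
  let f : ℕ → Ω → ℝ := fun Q x => ∑ q ∈ Finset.Icc 1 Q, (A q).indicator 1 x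
  have hInt : ∀ s : Set Ω, MeasurableSet s → Integrable (s.indicator (1 : Ω → ℝ)) μ := fun s hs =>
    (integrable_const (1:ℝ)).indicator hs
  have hmono : ∀ s : Set Ω, MeasurableSet s → ∫ x, s.indicator (1 : Ω → ℝ) x ∂μ = μ.real s := fun s hs =>
    integral_indicator_one hs
  have hfint : ∀ Q, Integrable (f Q) μ := fun Q => integrable_finsetSum _ (fun q _ => hInt _ (hA q))
  have hf1 : ∀ Q, ∫ x, f Q x ∂μ = P Q := by
    intro Q
    simp only [f]
    rw [integral_finsetSum _ (fun q _ => hInt _ (hA q))]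
    exact Finset.sum_congr rfl (fun q _ => hmono _ (hA q))
  have hsq : ∀ Q x, f Q x ^ 2 = ∑ q ∈ Finset.Icc 1 Q, ∑ r ∈ Finset.Icc 1 Q, (A q ∩ A r).indicator (1 : Ω → ℝ) x := by
    intro Q x
    simp only [f]
    rw [sq, Finset.sum_mul_sum]
    refine Finset.sum_congr rfl (fun q _ => Finset.sum_congr rfl (fun r _ => ?_))
    rw [Set.inter_indicator_one]; rfl
  have hf2i : ∀ Q, Integrable (fun x => f Q x ^ 2) μ := by
    intro Q
    simp only [hsq]
    exact integrable_finsetSum _ (fun q _ => integrable_finsetSum _ (fun r _ => hInt _ ((hA q).inter (hA r))))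
  have hf2 : ∀ Q, ∫ x, f Q x ^ 2 ∂μ ≤ P Q ^ 2 + K * P Q := by
    intro Q
    simp only [hsq]
    rw [integral_finsetSum _ (fun q _ => integrable_finsetSum _ (fun r _ => hInt _ ((hA q).inter (hA r))))]
    refine le_trans (le_of_eq ?_) (h Q)
    refine Finset.sum_congr rfl (fun q _ => ?_)
    rw [integral_finsetSum _ (fun r _ => hInt _ ((hA q).inter (hA r)))]
    exact Finset.sum_congr rfl (fun r _ => hmono _ ((hA q).inter (hA r)))
  have hvar : ∀ Q, ∫ x, (P Q - f Q x) ^ 2 ∂μ ≤ K * P Q := by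
    intro Q
    have e : ∀ x, (P Q - f Q x) ^ 2 = (P Q ^ 2 - 2 * P Q * f Q x) + f Q x ^ 2 := fun x => by ring
    simp only [e]
    have hI : Integrable (fun x => P Q ^ 2 - 2 * P Q * f Q x) μ :=
      (integrable_const _).sub ((hfint Q).const_mul _)
    rw [integral_add hI (hf2i Q),
      integral_sub (integrable_const _) ((hfint Q).const_mul _), integral_const_mul, hf1 Q]
    simp
    nlinarith [hf2 Q]
  have hvi : ∀ Q, Integrable (fun x => (P Q - f Q x) ^ 2) μ := by
    intro Q
    have e : ∀ x, (P Q - f Q x) ^ 2 = (P Q ^ 2 - 2 * P Q * f Q x) + f Q x ^ 2 := fun x => by ring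
    simp only [e]
    exact ((integrable_const _).sub ((hfint Q).const_mul _)).add (hf2i Q)
  have key : ∀ n : ℕ, μ {x | ∀ Q, f Q x ≤ n} = 0 := by
    intro n
    rw [← measureReal_eq_zero_iff]
    have hb : ∀ᶠ Q in atTop, μ.real {x | ∀ Q, f Q x ≤ n} ≤ 4 * K / P Q := by
      filter_upwards [hdiv.eventually_ge_atTop (2 * n + 1)] with Q hQ
      have hQ' : (2 * n + 1 : ℝ) ≤ P Q := hQ
      have hPpos : 0 < P Q := by have : (0:ℝ) ≤ n := by positivity
                                 linarith
      have hm := mul_meas_ge_le_integral_of_nonneg (μ := μ) (f := fun x => (P Q - f Q x) ^ 2)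
        (ae_of_all _ (fun x => sq_nonneg _)) (hvi Q) ((P Q / 2) ^ 2)
      have hsub : μ.real {x | ∀ Q, f Q x ≤ n} ≤ μ.real {x | (P Q / 2) ^ 2 ≤ (P Q - f Q x) ^ 2} := by
        apply measureReal_mono
        · intro x hx
          have hx' : f Q x ≤ n := hx Q
          show (P Q / 2) ^ 2 ≤ (P Q - f Q x) ^ 2
          apply pow_le_pow_left₀ (by positivity)
          linarith
        · finiteness
      have h3 : (P Q / 2) ^ 2 * μ.real {x | ∀ Q, f Q x ≤ n} ≤ K * P Q :=
        (mul_le_mul_of_nonneg_left hsub (by positivity)).trans (hm.trans (hvar Q))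
      rw [le_div_iff₀ hPpos]
      have h4 : P Q * (μ.real {x | ∀ Q, f Q x ≤ n} * P Q) ≤ P Q * (4 * K) := by nlinarith
      exact le_of_mul_le_mul_left h4 hPpos
    have ht : Tendsto (fun Q => 4 * K / P Q) atTop (nhds 0) := Tendsto.div_atTop tendsto_const_nhds hdiv
    exact le_antisymm (ge_of_tendsto ht hb) measureReal_nonneg
  have hall : ∀ᵐ x ∂μ, ∀ n : ℕ, ¬ ∀ Q, f Q x ≤ n := by
    rw [ae_all_iff]
    intro n
    rw [ae_iff]
    simpa using key n
  filter_upwards [hall] with x hx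
  intro hfin
  refine hx hfin.toFinset.card (fun Q => ?_)
  have : f Q x = (((Finset.Icc 1 Q).filter (fun q => x ∈ A q)).card : ℝ) := by
    simp [f, Set.indicator_apply]
  rw [this]
  norm_cast
  apply Finset.card_le_card
  intro q hq
  simp at hq ⊢
  exact ⟨by omega, hq.2⟩

lemma W_full_of_ae (ψ : ℕ → ℝ) (γ : ℝ)
    (h : ∀ᵐ x : UnitAddCircle, {q : ℕ | 0 < q ∧ x ∈ Bset γ (ψ q) q}.Infinite) :
    volume (W ψ γ) = 1 := by
  have h1 := (UnitAddCircle.measurePreserving_mk 0).quasiMeasurePreserving.ae h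
  rw [zero_add] at h1
  have h2 : ∀ᵐ x : ℝ ∂(volume.restrict (Set.Ioc 0 1)), x ∈ W ψ γ := by
    filter_upwards [h1, ae_restrict_mem measurableSet_Ioc] with x hx hx2
    refine ⟨⟨hx2.1.le, hx2.2⟩, ?_⟩
    convert hx using 4 with q
    rw [dnint_eq_norm, Bset, Set.mem_ofPred_eq, AddCircle.coe_sub, ← nsmul_eq_mul, AddCircle.coe_nsmul]
  apply le_antisymm
  · calc volume (W ψ γ) ≤ volume (Set.Icc (0:ℝ) 1) := measure_mono (fun x hx => hx.1)
      _ = 1 := by simp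
  · have h3 : volume (Set.Ioc (0:ℝ) 1 \ W ψ γ) = 0 := by
      rw [ae_restrict_iff' measurableSet_Ioc, ae_iff] at h2
      convert h2 using 2
      ext x; simp; tauto
    calc (1:ENNReal) = volume (Set.Ioc (0:ℝ) 1) := by simp
      _ ≤ volume (W ψ γ ∪ (Set.Ioc (0:ℝ) 1 \ W ψ γ)) := measure_mono (by
          intro x hx; by_cases h : x ∈ W ψ γ
          · exact Or.inl h
          · exact Or.inr ⟨hx, h⟩)
      _ ≤ volume (W ψ γ) + volume (Set.Ioc (0:ℝ) 1 \ W ψ γ) := measure_union_le _ _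
      _ = volume (W ψ γ) := by rw [h3, add_zero]

lemma dnint_nonneg (x : ℝ) : 0 ≤ dnint x := abs_nonneg _

lemma dnint_add_le (x y : ℝ) : dnint (x + y) ≤ dnint x + |y| := by
  unfold dnint
  have h1 : |x + y - round (x + y)| ≤ |x + y - round x| := round_le _ _
  have h2 : |x + y - round x| ≤ |x - round x| + |y| := by
    rw [show x + y - round x = (x - round x) + y by ring]; exact abs_add_le _ _
  linarith

lemma dnint_sub_le (x y : ℝ) : dnint (x - y) ≤ dnint x + dnint y := by
  simp only [dnint_eq_norm, AddCircle.coe_sub]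
  exact norm_sub_le _ _

open scoped Classical in
noncomputable def Ncount (γ : ℝ) (M : ℕ) (η : ℝ) : ℕ :=
  ((Finset.Icc 1 M).filter (fun m : ℕ => dnint (m * γ) < η)).card

lemma Ncount_le (γ : ℝ) (M : ℕ) (η : ℝ) : Ncount γ M η ≤ M := by
  unfold Ncount
  exact (Finset.card_filter_le _ _).trans (by simp)

lemma N_gap (γ : ℝ) (M : ℕ) (η T : ℝ) (hT : 0 < T)
    (h : ∀ m : ℕ, 1 ≤ m → m ≤ M → dnint (m * γ) < 2 * η → T ≤ m) :
    (Ncount γ M η : ℝ) ≤ M / T := by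
  classical
  have hc : Ncount γ M η ≤ (Finset.Icc 1 ⌊(M:ℝ) / T⌋₊).card := by
    unfold Ncount
    apply Finset.card_le_card_of_injOn (fun m : ℕ => ⌊(m:ℝ) / T⌋₊)
    · intro m hm
      simp only [Finset.coe_filter, Finset.mem_Icc, Set.mem_ofPred_eq] at hm
      have h0 := dnint_nonneg (m * γ)
      have := h m hm.1.1 hm.1.2 (by linarith)
      simp only [Finset.coe_Icc, Set.mem_Icc]
      constructor
      · rw [Nat.le_floor_iff (by positivity)]
        rw [le_div_iff₀ hT]; simpa using this
      · apply Nat.floor_le_floor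
        have : (m:ℝ) ≤ M := by exact_mod_cast hm.1.2
        gcongr
    · have main : ∀ m l : ℕ, 1 ≤ m → l ≤ M → dnint (m * γ) < η → dnint (l * γ) < η → m < l →
          ⌊(m:ℝ) / T⌋₊ ≠ ⌊(l:ℝ) / T⌋₊ := by
        intro m l hm hl h1 h2 hml heq
        have h3 : dnint (((l - m : ℕ) : ℝ) * γ) < 2 * η := by
          rw [Nat.cast_sub hml.le, sub_mul]
          have := dnint_sub_le (l * γ) (m * γ)
          linarith
        have h4 := h (l - m) (by omega) (by omega) h3
        rw [Nat.cast_sub hml.le] at h4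
        have h5 := Nat.floor_le (show 0 ≤ (m:ℝ) / T by positivity)
        have h6 := Nat.lt_floor_add_one ((l:ℝ) / T)
        rw [← heq] at h6
        have h7 : (l:ℝ) / T < m / T + 1 := by linarith
        rw [div_add_one hT.ne', div_lt_div_iff_of_pos_right hT] at h7
        linarith
      intro m hm l hl hml
      simp only [Finset.coe_filter, Finset.mem_Icc, Set.mem_ofPred_eq] at hm hl
      simp only at hml
      rcases lt_trichotomy m l with h1 | h1 | h1
      · exact absurd hml (main m l hm.1.1 hl.1.2 hm.2 hl.2 h1)
      · exact h1
      · exact absurd hml.symm (main l m hl.1.1 hm.1.2 hl.2 hm.2 h1)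
  rw [Nat.card_Icc, Nat.add_sub_cancel] at hc
  calc (Ncount γ M η : ℝ) ≤ ⌊(M:ℝ) / T⌋₊ := by exact_mod_cast hc
    _ ≤ M / T := Nat.floor_le (by positivity)

lemma N_block (γ : ℝ) (M : ℕ) (hM : 1 ≤ M) (η : ℝ) (hη : 0 ≤ η) :
    ∃ n : ℕ, 1 ≤ n ∧ n ≤ M ∧ dnint (n * γ) ≤ 1 / (M + 1) ∧
      (Ncount γ M η : ℝ) ≤ 4 * M * η + 6 * M / n := by
  classical
  obtain ⟨p, hp1, hp2⟩ := Real.exists_rat_abs_sub_le_and_den_le γ (n := M) (by omega)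
  set n := p.den with hn
  have hnpos : 0 < n := p.den_pos
  have hnR : (0:ℝ) < n := by exact_mod_cast hnpos
  have hMR : (n:ℝ) ≤ M := by exact_mod_cast hp2
  have hpe : (p:ℝ) = p.num / n := by rw [hn]; exact Rat.cast_def p
  refine ⟨n, hnpos, hp2, ?_, ?_⟩
  · unfold dnint
    refine (round_le _ p.num).trans ?_
    have : (n:ℝ) * γ - p.num = n * (γ - p) := by rw [hpe]; field_simp
    rw [this, abs_mul, abs_of_pos hnR]
    calc (n:ℝ) * |γ - p| ≤ n * (1 / ((M + 1) * n)) := by gcongr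
      _ = 1 / (M + 1) := by field_simp
  · have hb : ∀ i : ℕ, (((Finset.range n).filter
        (fun k : ℕ => dnint (((1 + i * n + k : ℕ) : ℝ) * γ) < η)).card : ℝ) ≤ 2 * η * n + 3 := by
      intro i
      have h1 := count_ap ((1 + i * n) * γ) (η + 1 / n) (by positivity) p.num n hnpos
      have hg : Int.gcd p.num n = 1 := p.reduced
      rw [hg] at h1
      have h2 : ((Finset.range n).filter
        (fun k : ℕ => dnint (((1 + i * n + k : ℕ) : ℝ) * γ) < η)).card ≤
        ((Finset.range n).filter (fun k : ℕ => dnint ((1 + i * n) * γ + p.num * k / n) < η + 1 / n)).card := by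
        apply Finset.card_le_card
        intro k hk
        rw [Finset.mem_filter] at hk ⊢
        refine ⟨hk.1, ?_⟩
        have hkn : (k:ℝ) ≤ n := by exact_mod_cast (Finset.mem_range.1 hk.1).le
        have e : (1 + i * n) * γ + p.num * k / n = ((1 + i * n + k : ℕ) : ℝ) * γ + (-(k * (γ - p))) := by
          rw [hpe]; push_cast; ring
        rw [e]
        refine (dnint_add_le _ _).trans_lt ?_
        have : |(-(k * (γ - p)) : ℝ)| ≤ 1 / n := by
          rw [abs_neg, abs_mul, Nat.abs_cast]
          calc (k:ℝ) * |γ - p| ≤ n * (1 / ((M + 1) * n)) := by gcongr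
            _ = 1 / (M + 1) := by field_simp
            _ ≤ 1 / n := by
              apply one_div_le_one_div_of_le hnR; linarith
        linarith [hk.2]
      have h3 : (2 * (η + 1 / n) * n + (1:ℕ) : ℝ) = 2 * η * n + 3 := by field_simp; push_cast; ring
      rw [h3] at h1
      exact le_trans (by exact_mod_cast h2) h1
    have hsub : (Finset.Icc 1 M).filter (fun m : ℕ => dnint (m * γ) < η) ⊆
        (Finset.range (M / n + 1)).biUnion (fun i => ((Finset.range n).filter
        (fun k : ℕ => dnint (((1 + i * n + k : ℕ) : ℝ) * γ) < η)).image (fun k => 1 + i * n + k)) := by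
      intro m hm
      rw [Finset.mem_filter, Finset.mem_Icc] at hm
      have e : 1 + (m - 1) / n * n + (m - 1) % n = m := by
        have := Nat.div_add_mod' (m - 1) n
        omega
      rw [Finset.mem_biUnion]
      refine ⟨(m - 1) / n, ?_, ?_⟩
      · rw [Finset.mem_range, Nat.lt_succ_iff]
        exact Nat.div_le_div_right (by omega)
      · rw [Finset.mem_image]
        refine ⟨(m - 1) % n, ?_, e⟩
        rw [Finset.mem_filter, e]
        exact ⟨Finset.mem_range.2 (Nat.mod_lt _ hnpos), hm.2⟩
    have hc : Ncount γ M η ≤ ∑ i ∈ Finset.range (M / n + 1), ((Finset.range n).filter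
        (fun k : ℕ => dnint (((1 + i * n + k : ℕ) : ℝ) * γ) < η)).card := by
      unfold Ncount
      refine (Finset.card_le_card hsub).trans (Finset.card_biUnion_le.trans ?_)
      exact Finset.sum_le_sum (fun i _ => Finset.card_image_le)
    have hc' : (Ncount γ M η : ℝ) ≤ ∑ i ∈ Finset.range (M / n + 1), (2 * η * n + 3) := by
      refine le_trans (Nat.cast_le.2 hc) ?_
      rw [Nat.cast_sum]
      exact Finset.sum_le_sum (fun i _ => hb i)
    rw [Finset.sum_const, Finset.card_range, nsmul_eq_mul] at hc'
    have hd : ((M / n + 1 : ℕ) : ℝ) ≤ 2 * (M / n) := by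
      push_cast
      have h1 : ((M / n : ℕ) : ℝ) ≤ M / n := Nat.cast_div_le
      have h2 : (1:ℝ) ≤ M / n := by rw [le_div_iff₀ hnR]; linarith
      linarith
    calc (Ncount γ M η : ℝ) ≤ ((M / n + 1 : ℕ) : ℝ) * (2 * η * n + 3) := hc'
      _ ≤ 2 * (M / n) * (2 * η * n + 3) := by gcongr
      _ = 4 * M * η + 6 * M / n := by field_simp; ring

lemma N_main (γ C s : ℝ) (r : ℕ) (hr : 1 ≤ r) (hs : 0 < s)
    (H : ∀ m : ℕ, 2 ≤ m → m ≤ r ^ 3 → (m:ℝ) ^ (-s) ≤ dnint (m * γ))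
    (h1 : (r:ℝ) ^ (-(1/4) : ℝ) < dnint γ) (h2 : 4 * C ≤ (r:ℝ) ^ ((1/4) : ℝ))
    (M : ℕ) (hM : 1 ≤ M) (hM2 : M ≤ r ^ 3) (ψ : ℝ) (hψ : 0 ≤ ψ) (hψ2 : ψ ≤ C / r) :
    (Ncount γ M (2 * M * ψ) : ℝ) ≤ 8 * M ^ 2 * ψ + 6 * M / (r:ℝ) ^ (1 / (4 * s)) := by
  have hrR : (0:ℝ) < r := by exact_mod_cast hr
  set T : ℝ := (r:ℝ) ^ (1 / (4 * s)) with hT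
  have hTpos : 0 < T := by positivity
  have key : ∀ m : ℕ, 1 ≤ m → m ≤ M → dnint (m * γ) ≤ (r:ℝ) ^ (-(1/4) : ℝ) → T ≤ m := by
    intro m hm hm2 hd
    rcases Nat.lt_or_ge m 2 with h | h
    · have : m = 1 := by omega
      subst this
      simp at hd h1
      linarith
    · have h3 := (H m h (hm2.trans hM2)).trans hd
      have hmR : (0:ℝ) < m := by exact_mod_cast hm
      rw [rpow_neg hmR.le, rpow_neg hrR.le, inv_le_inv₀ (by positivity) (by positivity)] at h3
      have h4 : T ^ s ≤ (m:ℝ) ^ s := by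
        rw [hT, ← rpow_mul hrR.le]
        rw [show 1 / (4 * s) * s = (1/4 : ℝ) by field_simp]
        exact h3
      exact (rpow_le_rpow_iff hTpos.le hmR.le hs).1 h4
  have hMpos : (0:ℝ) < M := by exact_mod_cast hM
  rcases le_or_gt ((r:ℝ) ^ ((1/4) : ℝ)) M with h | h
  · obtain ⟨n, hn1, hn2, hn3, hn4⟩ := N_block γ M hM (2 * M * ψ) (by positivity)
    have hTn : T ≤ n := by
      refine key n hn1 hn2 (hn3.trans ?_)
      rw [rpow_neg hrR.le, ← one_div]
      apply one_div_le_one_div_of_le (by positivity); linarith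
    have : 6 * (M:ℝ) / n ≤ 6 * M / T := by gcongr
    nlinarith
  · have hg := N_gap γ M (2 * M * ψ) T hTpos (by
      intro m hm hm2 hd
      refine key m hm hm2 (hd.le.trans ?_)
      calc 2 * (2 * M * ψ) ≤ 2 * (2 * (r:ℝ) ^ ((1/4) : ℝ) * (C / r)) := by gcongr
        _ = (4 * C) * (r:ℝ) ^ ((1/4) : ℝ) / r := by ring
        _ ≤ (r:ℝ) ^ ((1/4) : ℝ) * (r:ℝ) ^ ((1/4) : ℝ) / r := by gcongr
        _ = (r:ℝ) ^ ((1/4 + 1/4 - 1) : ℝ) := by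
          rw [rpow_sub hrR, rpow_add hrR, rpow_one]
        _ ≤ (r:ℝ) ^ (-(1/4) : ℝ) := by
          apply rpow_le_rpow_of_exponent_le (by exact_mod_cast hr); norm_num)
    have h5 : (M:ℝ) / T ≤ 6 * M / T := by gcongr; linarith
    have h6 : 0 ≤ 8 * (M:ℝ) ^ 2 * ψ := by positivity
    linarith

lemma N_final (γ C : ℝ) (hγ : Irrational γ) (ht : TamelyLiouville γ) :
    ∃ r0 : ℕ, ∀ r : ℕ, r0 ≤ r → ∀ M : ℕ, 1 ≤ M → M ≤ r ^ 3 → ∀ ψ : ℝ, 0 ≤ ψ → ψ ≤ C / r →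
    (Ncount γ M (2 * M * ψ) : ℝ) ≤ 8 * M ^ 2 * ψ + 6 * M / (Real.logb 2 r) ^ 6 := by
  obtain ⟨ε, hε, c, hc, hσ⟩ := ht
  have hpos : ∀ m : ℕ, 1 ≤ m → 0 < dnint (m * γ) := by
    intro m hm
    unfold dnint
    rw [abs_pos, sub_ne_zero]
    exact (hγ.natCast_mul (by omega)).ne_int _
  have e1 : ∀ᶠ r : ℕ in atTop, (r:ℝ) ^ (-(1/4) : ℝ) < dnint γ := by
    have := (tendsto_rpow_neg_atTop (show (0:ℝ) < 1/4 by norm_num)).comp (tendsto_natCast_atTop_atTop (R := ℝ))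
    refine this.eventually_lt_const ?_
    simpa using hpos 1 le_rfl
  have e2 : ∀ᶠ r : ℕ in atTop, 4 * C ≤ (r:ℝ) ^ ((1/4) : ℝ) :=
    ((tendsto_rpow_atTop (show (0:ℝ) < 1/4 by norm_num)).comp tendsto_natCast_atTop_atTop).eventually_ge_atTop _
  have hl : Tendsto (fun r : ℕ => Real.logb 2 r) atTop atTop :=
    (Real.tendsto_logb_atTop (by norm_num)).comp tendsto_natCast_atTop_atTop
  set c' : ℝ := 3 * c + 1
  have hc' : 0 < c' := by positivity
  have e3 : ∀ᶠ x : ℝ in atTop, x ^ 6 ≤ (2:ℝ) ^ (x / (4 * (c' * x ^ ((1:ℝ)/4)))) := by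
    have h1 := (isLittleO_log_rpow_atTop (show (0:ℝ) < 3/4 by norm_num)).bound
      (show 0 < Real.log 2 / (24 * c') by have := Real.log_pos one_lt_two; positivity)
    filter_upwards [h1, eventually_ge_atTop 1] with x hx hx1
    have hx0 : 0 < x := by linarith
    rw [Real.norm_of_nonneg (Real.log_nonneg hx1), Real.norm_of_nonneg (by positivity)] at hx
    rw [← Real.log_le_log_iff (by positivity) (by positivity), Real.log_pow, Real.log_rpow (by norm_num)]
    have e : x / (4 * (c' * x ^ ((1:ℝ)/4))) = x ^ ((3:ℝ)/4) / (4 * c') := by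
      have : x = x ^ ((3:ℝ)/4) * x ^ ((1:ℝ)/4) := by
        rw [← rpow_add hx0]; norm_num
      have h4 : 0 < x ^ ((1:ℝ)/4) := by positivity
      rw [div_eq_div_iff (by positivity) (by positivity)]
      nth_rewrite 1 [this]; ring
    rw [e]
    calc (6:ℕ) * Real.log x ≤ 6 * (Real.log 2 / (24 * c') * x ^ ((3:ℝ)/4)) := by push_cast; gcongr
      _ = x ^ ((3:ℝ)/4) / (4 * c') * Real.log 2 := by field_simp; norm_num
  obtain ⟨r0, hr0⟩ := eventually_atTop.1 (e1.and (e2.and ((hl.eventually e3).and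
    ((hl.eventually_ge_atTop 1).and (eventually_ge_atTop 2)))))
  refine ⟨r0, fun r hr M hM hM2 ψ hψ hψ2 => ?_⟩
  obtain ⟨a1, a2, a3, a4, a5⟩ := hr0 r hr
  set x := Real.logb 2 r with hx
  have hrR : (0:ℝ) < r := by positivity
  have hr3 : 2 ≤ r ^ 3 := by nlinarith [Nat.one_le_pow 2 r (by omega)]
  set s := sigmaExp γ (r ^ 3) + 1 with hs
  have hne : {σ : ℝ | 0 < σ ∧ ∀ q : ℕ, 2 ≤ q → q ≤ r ^ 3 → (q : ℝ) ^ (-σ) ≤ dnint (q * γ)}.Nonempty := by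
    have hev : ∀ᶠ σ : ℝ in atTop, ∀ q ∈ Finset.Icc 2 (r ^ 3), (q : ℝ) ^ (-σ) ≤ dnint (q * γ) := by
      rw [Filter.eventually_all_finset]
      intro q hq
      rw [Finset.mem_Icc] at hq
      have hq2 : (1:ℝ) < q := by exact_mod_cast (show 1 < q by omega)
      have : Tendsto (fun σ : ℝ => (q:ℝ) ^ (-σ)) atTop (nhds 0) :=
        (tendsto_rpow_atBot_of_base_gt_one _ hq2).comp tendsto_neg_atTop_atBot
      exact (this.eventually_lt_const (hpos q (by omega))).mono (fun _ h => h.le)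
    obtain ⟨σ, h1, h2⟩ := (hev.and (eventually_gt_atTop 0)).exists
    exact ⟨σ, h2, fun q h3 h4 => h1 q (Finset.mem_Icc.2 ⟨h3, h4⟩)⟩
  have hσ0 : 0 ≤ sigmaExp γ (r ^ 3) := Real.sInf_nonneg (fun σ h => h.1.le)
  have hspos : 0 < s := by positivity
  have H : ∀ m : ℕ, 2 ≤ m → m ≤ r ^ 3 → (m:ℝ) ^ (-s) ≤ dnint (m * γ) := by
    intro m hm hm2
    obtain ⟨σ, h1, h2⟩ := exists_lt_of_csInf_lt hne (show sigmaExp γ (r ^ 3) < s by linarith)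
    refine le_trans ?_ (h1.2 m hm hm2)
    apply rpow_le_rpow_of_exponent_le
    · exact_mod_cast (show 1 ≤ m by omega)
    · linarith
  have hsle : s ≤ c' * x ^ ((1:ℝ)/4) := by
    have h1 := hσ (r ^ 3) hr3
    have h2 : Real.logb 2 ((r ^ 3 : ℕ) : ℝ) = 3 * x := by
      push_cast; rw [Real.logb_pow]; norm_num [hx]
    rw [h2] at h1
    have h3 : (3 * x) ^ ((1:ℝ)/4 - ε) ≤ 3 * x ^ ((1:ℝ)/4) := by
      calc (3 * x) ^ ((1:ℝ)/4 - ε) ≤ (3 * x) ^ ((1:ℝ)/4) := by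
            apply rpow_le_rpow_of_exponent_le <;> linarith
        _ = 3 ^ ((1:ℝ)/4) * x ^ ((1:ℝ)/4) := by rw [mul_rpow] <;> linarith
        _ ≤ 3 ^ (1:ℝ) * x ^ ((1:ℝ)/4) := by
          gcongr
          · norm_num
          · norm_num
        _ = 3 * x ^ ((1:ℝ)/4) := by rw [rpow_one]
    have h4 : 1 ≤ x ^ ((1:ℝ)/4) := one_le_rpow a4 (by norm_num)
    have h5 := mul_le_mul_of_nonneg_left h3 hc.le
    calc s ≤ c * (3 * x ^ ((1:ℝ)/4)) + 1 := by linarith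
      _ ≤ c' * x ^ ((1:ℝ)/4) := by simp only [c']; linarith
  have hm := N_main γ C s r (by omega) hspos H a1 a2 M hM hM2 ψ hψ hψ2
  have hT : x ^ 6 ≤ (r:ℝ) ^ (1 / (4 * s)) := by
    refine a3.trans ?_
    have e : (r:ℝ) = 2 ^ x := by rw [hx, Real.rpow_logb] <;> norm_num; omega
    rw [e, ← rpow_mul (by norm_num)]
    apply rpow_le_rpow_of_exponent_le (by norm_num)
    rw [mul_one_div]
    gcongr
  have hx6 : 0 < x ^ 6 := by positivity
  have : 6 * (M:ℝ) / (r:ℝ) ^ (1 / (4 * s)) ≤ 6 * M / x ^ 6 := by gcongr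
  linarith

structure Good (γ C : ℝ) (ψ : ℝ) (r : ℕ) (x L : ℝ) : Prop where
  rpos : 1 ≤ r
  xdef : x = Real.logb 2 r
  Ldef : L = Real.logb 2 x
  x2 : 2 ≤ x
  rx : 2 * x ^ 2 ≤ (r:ℝ) ^ 2
  up : ψ ≤ C / (r * L ^ 2)
  lo : 1 / (r * x ^ 2) ≤ ψ
  tau : (r.divisors.card : ℝ) ≤ x ^ 4
  cnt : ∀ M : ℕ, 1 ≤ M → M ≤ r ^ 3 →
    (Ncount γ M (2 * M * ψ) : ℝ) ≤ 8 * M ^ 2 * ψ + 6 * M / x ^ 6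

lemma logb_two_le (y : ℝ) (hy : 0 < y) : Real.logb 2 y ≤ 2 * y := by
  unfold Real.logb
  have h2 : (1/2:ℝ) < Real.log 2 := by linarith [Real.log_two_gt_d9]
  rw [div_le_iff₀ (by linarith)]
  have := Real.log_le_sub_one_of_pos hy
  nlinarith

lemma Good.L1 {γ C ψ : ℝ} {r : ℕ} {x L : ℝ} (h : Good γ C ψ r x L) : 1 ≤ L := by
  rw [h.Ldef, Real.le_logb_iff_rpow_le (by norm_num) (by linarith [h.x2])]
  simpa using h.x2

lemma divsum {r : ℕ} {x L : ℝ} (hx : 2 ≤ x) (hL : L = Real.logb 2 x) (hL1 : 1 ≤ L)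
    (tau : (r.divisors.card : ℝ) ≤ x ^ 4) :
    ∑ d ∈ r.divisors, (Real.logb 2 d + 2 * L + 2) / (d:ℝ) ≤ 120 * L ^ 2 := by
  have hx0 : 0 < x := by linarith
  have hlogx : Real.log x ≤ L := by
    rw [hL, Real.logb, le_div_iff₀ (Real.log_pos one_lt_two)]
    have := Real.log_nonneg (show 1 ≤ x by linarith)
    nlinarith [Real.log_two_lt_d9]
  rw [← Finset.sum_filter_add_sum_filter_not r.divisors (fun d : ℕ => (d:ℝ) ≤ x ^ 8)]
  have h1 : ∑ d ∈ r.divisors with ((d:ℕ):ℝ) ≤ x ^ 8, (Real.logb 2 d + 2 * L + 2) / (d:ℝ) ≤ 108 * L ^ 2 := by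
    have ha : ∀ d ∈ r.divisors.filter (fun d : ℕ => (d:ℝ) ≤ x ^ 8),
        (Real.logb 2 d + 2 * L + 2) / (d:ℝ) ≤ 12 * L * ((d:ℝ))⁻¹ := by
      intro d hd
      rw [Finset.mem_filter] at hd
      have hd0 : (0:ℝ) < d := by exact_mod_cast Nat.pos_of_mem_divisors hd.1
      have : Real.logb 2 d ≤ 8 * L := by
        calc Real.logb 2 d ≤ Real.logb 2 (x ^ 8) := Real.logb_le_logb_of_le (by norm_num) hd0 hd.2
          _ = 8 * L := by rw [Real.logb_pow, hL]; norm_num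
      rw [div_eq_mul_inv]
      gcongr
      linarith
    refine (Finset.sum_le_sum ha).trans ?_
    rw [← Finset.mul_sum]
    have hb : ∑ d ∈ r.divisors with ((d:ℕ):ℝ) ≤ x ^ 8, ((d:ℝ))⁻¹ ≤ ∑ d ∈ Finset.Icc 1 ⌊x ^ 8⌋₊, ((d:ℝ))⁻¹ := by
      apply Finset.sum_le_sum_of_subset_of_nonneg
      · intro d hd
        rw [Finset.mem_filter] at hd
        rw [Finset.mem_Icc]
        exact ⟨Nat.pos_of_mem_divisors hd.1, Nat.le_floor hd.2⟩
      · intros; positivity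
    have hc : ∑ d ∈ Finset.Icc 1 ⌊x ^ 8⌋₊, ((d:ℝ))⁻¹ ≤ 9 * L := by
      have := harmonic_floor_le_one_add_log (x ^ 8) (one_le_pow₀ (by linarith))
      rw [harmonic_eq_sum_Icc] at this
      push_cast at this
      rw [Real.log_pow] at this
      push_cast at this
      linarith
    nlinarith [hb.trans hc]
  have h2 : ∑ d ∈ r.divisors with ¬ ((d:ℕ):ℝ) ≤ x ^ 8, (Real.logb 2 d + 2 * L + 2) / (d:ℝ) ≤ 12 * L ^ 2 := by
    have ha : ∀ d ∈ r.divisors.filter (fun d : ℕ => ¬ (d:ℝ) ≤ x ^ 8),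
        (Real.logb 2 d + 2 * L + 2) / (d:ℝ) ≤ 12 / x ^ 4 := by
      intro d hd
      rw [Finset.mem_filter, not_le] at hd
      have hd0 : (0:ℝ) < d := by exact_mod_cast Nat.pos_of_mem_divisors hd.1
      set y := Real.sqrt d with hy
      have hyy : y ^ 2 = d := Real.sq_sqrt hd0.le
      have hy0 : 0 < y := Real.sqrt_pos.2 hd0
      have hxy : x ^ 4 ≤ y := by
        rw [hy]; apply Real.le_sqrt_of_sq_le
        calc (x ^ 4) ^ 2 = x ^ 8 := by ring
          _ ≤ (d:ℝ) := hd.2.le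
      have h3 : Real.logb 2 d ≤ 4 * y := by
        rw [← hyy, Real.logb_pow]
        have := logb_two_le y hy0
        push_cast; linarith
      have h4 : L ≤ 2 * x := by rw [hL]; exact logb_two_le x hx0
      have h5 : 2 * x ≤ x ^ 4 := by
        have : 8 ≤ x ^ 3 := by
          calc (8:ℝ) = 2 ^ 3 := by norm_num
            _ ≤ x ^ 3 := by gcongr
        nlinarith
      rw [div_le_div_iff₀ hd0 (by positivity)]
      calc (Real.logb 2 d + 2 * L + 2) * x ^ 4 ≤ (12 * y) * y := by
            gcongr
            linarith
        _ = 12 * d := by rw [← hyy]; ring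
    calc _ ≤ ∑ d ∈ r.divisors with ¬ ((d:ℕ):ℝ) ≤ x ^ 8, 12 / x ^ 4 := Finset.sum_le_sum ha
      _ = ((r.divisors.filter (fun d : ℕ => ¬ (d:ℝ) ≤ x ^ 8)).card : ℝ) * (12 / x ^ 4) := by
        rw [Finset.sum_const, nsmul_eq_mul]
      _ ≤ x ^ 4 * (12 / x ^ 4) := by
        gcongr
        refine le_trans ?_ tau
        exact_mod_cast Finset.card_filter_le _ _
      _ = 12 := by field_simp
      _ ≤ 12 * L ^ 2 := by nlinarith
  linarith

open scoped Classical in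
lemma T2_bound {γ C ψ : ℝ} {q : ℕ} {x L : ℝ} (h : Good γ C ψ q x L) (hC : 0 < C) (hψ : 0 ≤ ψ) :
    ∑ r ∈ Finset.Ico 1 q, (if dnint (((q - r) / q.gcd r : ℕ) * γ) < 2 * (q / q.gcd r : ℕ) * ψ then
      2 * (q.gcd r : ℝ) * (ψ / q) else 0) ≤ (1920 * C + 12) * ψ := by
  have hq0 : 0 < q := h.rpos
  have hqR : (0:ℝ) < q := by exact_mod_cast hq0
  have hL1 := h.L1
  have hx0 : 0 < x := by linarith [h.x2]
  rw [← Finset.sum_fiberwise_of_maps_to (s := Finset.Ico 1 q) (t := q.divisors) (g := fun r => q.gcd r)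
    (by intro r _; exact Nat.mem_divisors.2 ⟨Nat.gcd_dvd_left _ _, hq0.ne'⟩)]
  have hd : ∀ d ∈ q.divisors, (∑ r ∈ Finset.Ico 1 q with q.gcd r = d,
      (if dnint (((q - r) / q.gcd r : ℕ) * γ) < 2 * (q / q.gcd r : ℕ) * ψ then
      2 * (q.gcd r : ℝ) * (ψ / q) else 0)) ≤ 16 * C * ψ / L ^ 2 * ((Real.logb 2 d + 2 * L + 2) / (d:ℝ)) + 12 * ψ / x ^ 4 := by
    intro d hd
    have hd0 : 0 < d := Nat.pos_of_mem_divisors hd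
    have hdR : (0:ℝ) < d := by exact_mod_cast hd0
    have hdvd : d ∣ q := (Nat.mem_divisors.1 hd).1
    have hM1 : 1 ≤ q / d := Nat.div_pos (Nat.le_of_dvd hq0 hdvd) hd0
    have e1 : (∑ r ∈ Finset.Ico 1 q with q.gcd r = d,
      (if dnint (((q - r) / q.gcd r : ℕ) * γ) < 2 * (q / q.gcd r : ℕ) * ψ then
      2 * (q.gcd r : ℝ) * (ψ / q) else 0)) = ∑ r ∈ Finset.Ico 1 q with q.gcd r = d,
      (if dnint (((q - r) / d : ℕ) * γ) < 2 * (q / d : ℕ) * ψ then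
      2 * (d : ℝ) * (ψ / q) else 0) := by
      refine Finset.sum_congr rfl (fun r hr => ?_)
      rw [(Finset.mem_filter.1 hr).2]
    rw [e1, ← Finset.sum_filter, Finset.sum_const, nsmul_eq_mul]
    have hcard : (((Finset.Ico 1 q).filter (fun r => q.gcd r = d)).filter
        (fun r => dnint (((q - r) / d : ℕ) * γ) < 2 * (q / d : ℕ) * ψ)).card ≤
        Ncount γ (q / d) (2 * (q / d : ℕ) * ψ) := by
      unfold Ncount
      apply Finset.card_le_card_of_injOn (fun r => (q - r) / d)
      · intro r hr
        simp only [Finset.coe_filter, Finset.mem_filter, Finset.mem_Ico, Set.mem_ofPred_eq, Finset.mem_Icc] at hr ⊢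
        obtain ⟨⟨⟨h1, h2⟩, h3⟩, h4⟩ := hr
        have hdr : d ∣ q - r := Nat.dvd_sub hdvd (h3 ▸ Nat.gcd_dvd_right q r)
        exact ⟨⟨Nat.div_pos (Nat.le_of_dvd (by omega) hdr) hd0, Nat.div_le_div_right (by omega)⟩, h4⟩
      · intro r hr l hl hrl
        simp only [Finset.coe_filter, Finset.mem_filter, Finset.mem_Ico, Set.mem_ofPred_eq] at hr hl
        have hdr : d ∣ q - r := Nat.dvd_sub hdvd (hr.1.2 ▸ Nat.gcd_dvd_right q r)
        have hdl : d ∣ q - l := Nat.dvd_sub hdvd (hl.1.2 ▸ Nat.gcd_dvd_right q l)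
        have := Nat.div_left_inj hdr hdl |>.1 hrl
        omega
    have hq3 : q / d ≤ q ^ 3 := (Nat.div_le_self _ _).trans (Nat.le_self_pow (by norm_num) _)
    have hN := h.cnt (q / d) hM1 hq3
    have hMe : ((q / d : ℕ) : ℝ) = q / d := Nat.cast_div hdvd hdR.ne'
    have hcR : ((((Finset.Ico 1 q).filter (fun r => q.gcd r = d)).filter
        (fun r => dnint (((q - r) / d : ℕ) * γ) < 2 * (q / d : ℕ) * ψ)).card : ℝ) ≤
        8 * (q / d : ℕ) ^ 2 * ψ + 6 * (q / d : ℕ) / x ^ 6 := le_trans (by exact_mod_cast hcard) hN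
    have hlogd : 0 ≤ Real.logb 2 d := Real.logb_nonneg (by norm_num) (by exact_mod_cast hd0)
    have hqψ : q * ψ ≤ C / L ^ 2 := by
      calc q * ψ ≤ q * (C / (q * L ^ 2)) := by gcongr; exact h.up
        _ = C / L ^ 2 := by field_simp
    calc _ ≤ (8 * ((q / d : ℕ) : ℝ) ^ 2 * ψ + 6 * ((q / d : ℕ) : ℝ) / x ^ 6) * (2 * (d : ℝ) * (ψ / q)) := by gcongr
      _ = 16 * (q * ψ) * ψ * (1 / d) + 12 * ψ / x ^ 6 := by rw [hMe]; field_simp; ring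
      _ ≤ 16 * (C / L ^ 2) * ψ * ((Real.logb 2 d + 2 * L + 2) / d) + 12 * ψ / x ^ 4 := by
        gcongr
        · linarith
        · linarith [h.x2]
        · norm_num
      _ = _ := by ring
  refine (Finset.sum_le_sum hd).trans ?_
  rw [Finset.sum_add_distrib, ← Finset.mul_sum, Finset.sum_const, nsmul_eq_mul]
  have h1 := divsum h.x2 h.Ldef hL1 h.tau
  calc _ ≤ 16 * C * ψ / L ^ 2 * (120 * L ^ 2) + x ^ 4 * (12 * ψ / x ^ 4) := by
        gcongr
        exact h.tau
    _ = (1920 * C + 12) * ψ := by field_simp; ring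

lemma geom_tail (J J' : ℕ) : ∑ j ∈ Finset.Ico J J', ((1:ℝ)/2) ^ j ≤ 2 * (1/2) ^ J := by
  rcases le_total J J' with h | h
  · rw [geom_sum_Ico (by norm_num) h]
    have : (0:ℝ) ≤ (1/2) ^ J' := by positivity
    rw [div_le_iff_of_neg (by norm_num)]
    linarith
  · rw [Finset.Ico_eq_empty_of_le h]; simp

lemma T1_inner {γ C ψ : ℝ} {r : ℕ} {x L : ℝ} (h : Good γ C ψ r x L) (hC : 0 < C) (hψ : 0 ≤ ψ)
    (d : ℕ) (hd : d ∈ r.divisors) (J' : ℕ) :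
    ∑ j ∈ Finset.range J', (2 * d * C / (4 ^ j * r ^ 2 * L ^ 2)) *
      (Ncount γ (2 ^ (j + 1) * (r / d)) (2 * (2 ^ (j + 1) * (r / d) : ℕ) * ψ) : ℝ)
    ≤ C * ψ / L ^ 2 * (64 * ((Real.logb 2 d + 2 * L + 2) / d) + 48 / x ^ 4) := by
  have hr0 : 0 < r := h.rpos
  have hrR : (0:ℝ) < r := by exact_mod_cast hr0
  have hL1 := h.L1
  have hx0 : 0 < x := by linarith [h.x2]
  have hd0 : 0 < d := Nat.pos_of_mem_divisors hd
  have hdR : (0:ℝ) < d := by exact_mod_cast hd0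
  have hdvd : d ∣ r := (Nat.mem_divisors.1 hd).1
  have hM1 : 1 ≤ r / d := Nat.div_pos (Nat.le_of_dvd hr0 hdvd) hd0
  have hMe : ((r / d : ℕ) : ℝ) = r / d := Nat.cast_div hdvd hdR.ne'
  have hlogd : 0 ≤ Real.logb 2 d := Real.logb_nonneg (by norm_num) (by exact_mod_cast hd0)
  set Y := Real.logb 2 d + 2 * L with hY
  have hY2 : (2:ℝ) ^ Y = d * x ^ 2 := by
    have : Y = Real.logb 2 (d * x ^ 2) := by
      rw [Real.logb_mul hdR.ne' (by positivity), Real.logb_pow, hY, h.Ldef]; norm_num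
    rw [this, Real.rpow_logb (by norm_num) (by norm_num) (by positivity)]
  set J := ⌈Y⌉₊ with hJ
  have hJle : (J:ℝ) ≤ Y + 1 := (Nat.ceil_lt_add_one (by positivity)).le
  have hJ2 : d * x ^ 2 ≤ (2:ℝ) ^ J := by
    rw [← hY2, ← Real.rpow_natCast]
    exact Real.rpow_le_rpow_of_exponent_le (by norm_num) (Nat.le_ceil _)
  have hterm : ∀ j ∈ Finset.range J', (2 * d * C / (4 ^ j * r ^ 2 * L ^ 2)) *
      (Ncount γ (2 ^ (j + 1) * (r / d)) (2 * (2 ^ (j + 1) * (r / d) : ℕ) * ψ) : ℝ)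
      ≤ (if j < J then 64 * C * ψ / (d * L ^ 2) else 0) + 24 * C / (r * L ^ 2 * x ^ 6) * (1/2) ^ j
        + (if j < J then 0 else 4 * C / (r * L ^ 2) * (1/2) ^ j) := by
    intro j _
    have h4 : (4:ℝ) ^ j = 2 ^ j * 2 ^ j := by rw [← mul_pow]; norm_num
    have h2j : (0:ℝ) < 2 ^ j := by positivity
    by_cases hj : j < J
    · rw [if_pos hj, if_pos hj, add_zero]
      have hjY : (j:ℝ) < Y := Nat.lt_ceil.1 hj
      have h2 : (2:ℝ) ^ j ≤ d * x ^ 2 := by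
        rw [← hY2, ← Real.rpow_natCast]
        exact Real.rpow_le_rpow_of_exponent_le (by norm_num) hjY.le
      have hMle : 2 ^ (j + 1) * (r / d) ≤ r ^ 3 := by
        have : ((2 ^ (j + 1) * (r / d) : ℕ) : ℝ) ≤ ((r ^ 3 : ℕ) : ℝ) := by
          push_cast [hMe]
          calc (2:ℝ) ^ (j + 1) * (r / d) = 2 * 2 ^ j * (r / d) := by ring
            _ ≤ 2 * (d * x ^ 2) * (r / d) := by gcongr
            _ = (2 * x ^ 2) * r := by field_simp
            _ ≤ r ^ 2 * r := by gcongr; exact h.rx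
            _ = r ^ 3 := by ring
        exact_mod_cast this
      have hN := h.cnt (2 ^ (j + 1) * (r / d)) (Nat.mul_pos (by positivity) hM1) hMle
      calc _ ≤ (2 * d * C / (4 ^ j * r ^ 2 * L ^ 2)) * (8 * ((2 ^ (j + 1) * (r / d) : ℕ) : ℝ) ^ 2 * ψ + 6 * ((2 ^ (j + 1) * (r / d) : ℕ) : ℝ) / x ^ 6) := by gcongr
        _ = _ := by
          push_cast [hMe]
          rw [h4, pow_succ, one_div, inv_pow]
          field_simp
          ring
    · rw [if_neg hj, if_neg hj]
      have hN : (Ncount γ (2 ^ (j + 1) * (r / d)) (2 * (2 ^ (j + 1) * (r / d) : ℕ) * ψ) : ℝ) ≤ ((2 ^ (j + 1) * (r / d) : ℕ) : ℝ) := by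
        exact_mod_cast Ncount_le _ _ _
      have h5 : 0 ≤ 24 * C / (r * L ^ 2 * x ^ 6) * (1/2) ^ j := by positivity
      calc _ ≤ (2 * d * C / (4 ^ j * r ^ 2 * L ^ 2)) * ((2 ^ (j + 1) * (r / d) : ℕ) : ℝ) := by gcongr
        _ = 4 * C / (r * L ^ 2) * (1/2) ^ j := by
          push_cast [hMe]
          rw [h4, pow_succ, one_div, inv_pow]
          field_simp
          ring
        _ ≤ _ := by linarith
  refine (Finset.sum_le_sum hterm).trans ?_
  rw [Finset.sum_add_distrib, Finset.sum_add_distrib]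
  have s1 : ∑ j ∈ Finset.range J', (if j < J then 64 * C * ψ / (d * L ^ 2) else 0) ≤ (Y + 1) * (64 * C * ψ / (d * L ^ 2)) := by
    rw [← Finset.sum_filter, Finset.sum_const, nsmul_eq_mul]
    have : ((Finset.range J').filter (fun j => j < J)).card ≤ J := by
      calc _ ≤ (Finset.range J).card := Finset.card_le_card (by intro j hj; simp at hj ⊢; exact hj.2)
        _ = J := by simp
    have h6 : (((Finset.range J').filter (fun j => j < J)).card : ℝ) ≤ Y + 1 := le_trans (by exact_mod_cast this) hJle
    gcongr
  have s2 : ∑ j ∈ Finset.range J', 24 * C / (r * L ^ 2 * x ^ 6) * ((1:ℝ)/2) ^ j ≤ 48 * C * ψ / (L ^ 2 * x ^ 4) := by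
    rw [← Finset.mul_sum, Finset.range_eq_Ico]
    have := geom_tail 0 J'
    calc _ ≤ 24 * C / (r * L ^ 2 * x ^ 6) * (2 * (1/2) ^ 0) := by gcongr
      _ = 48 * C / (L ^ 2 * x ^ 4) * (1 / (r * x ^ 2)) := by field_simp; norm_num
      _ ≤ 48 * C / (L ^ 2 * x ^ 4) * ψ := by gcongr; exact h.lo
      _ = _ := by ring
  have s3 : ∑ j ∈ Finset.range J', (if j < J then 0 else 4 * C / (r * L ^ 2) * ((1:ℝ)/2) ^ j) ≤ 8 * C * ψ / (d * L ^ 2) := by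
    have e : ∑ j ∈ Finset.range J', (if j < J then 0 else 4 * C / (r * L ^ 2) * ((1:ℝ)/2) ^ j)
        = ∑ j ∈ Finset.Ico J J', 4 * C / (r * L ^ 2) * ((1:ℝ)/2) ^ j := by
      rw [← Finset.sum_filter_add_sum_filter_not (Finset.range J') (fun j => j < J)]
      rw [Finset.sum_eq_zero (s := (Finset.range J').filter (fun j => j < J)) (by
        intro j hj; rw [if_pos (Finset.mem_filter.1 hj).2]), zero_add]
      refine Finset.sum_congr ?_ ?_
      · ext j; simp [and_comm]
      · intro j hj; rw [if_neg]; simp at hj; omega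
    rw [e, ← Finset.mul_sum]
    have := geom_tail J J'
    calc _ ≤ 4 * C / (r * L ^ 2) * (2 * (1/2) ^ J) := by gcongr
      _ = 8 * C / (r * L ^ 2) * (1 / 2 ^ J) := by rw [one_div, inv_pow]; ring
      _ ≤ 8 * C / (r * L ^ 2) * (1 / (d * x ^ 2)) := by gcongr
      _ = 8 * C / (d * L ^ 2) * (1 / (r * x ^ 2)) := by field_simp
      _ ≤ 8 * C / (d * L ^ 2) * ψ := by gcongr; exact h.lo
      _ = _ := by ring
  calc _ ≤ (Y + 1) * (64 * C * ψ / (d * L ^ 2)) + 48 * C * ψ / (L ^ 2 * x ^ 4) + 64 * C * ψ / (d * L ^ 2) := by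
        have : 8 * C * ψ / (d * L ^ 2) ≤ 64 * C * ψ / (d * L ^ 2) := by gcongr; norm_num
        linarith
    _ = _ := by field_simp; ring

open scoped Classical in
lemma T1_bound {γ C ψ : ℝ} {r : ℕ} {x L : ℝ} (h : Good γ C ψ r x L) (hC : 0 < C) (hψ : 0 ≤ ψ) (Q : ℕ) :
    ∑ q ∈ Finset.Ioc r Q, (if dnint (((q - r) / q.gcd r : ℕ) * γ) < 2 * (q / q.gcd r : ℕ) * ψ then
      2 * (q.gcd r : ℝ) * (C / (q ^ 2 * L ^ 2)) else 0) ≤ (7728 * C) * ψ := by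
  have hr0 : 0 < r := h.rpos
  have hrR : (0:ℝ) < r := by exact_mod_cast hr0
  have hL1 := h.L1
  have hx0 : 0 < x := by linarith [h.x2]
  rw [← Finset.sum_fiberwise_of_maps_to (s := Finset.Ioc r Q) (t := r.divisors ×ˢ Finset.range (Q + 1))
    (g := fun q => (q.gcd r, Nat.log 2 (q / r)))
    (by
      intro q hq
      rw [Finset.mem_Ioc] at hq
      rw [Finset.mem_product]
      refine ⟨Nat.mem_divisors.2 ⟨Nat.gcd_dvd_right _ _, hr0.ne'⟩, ?_⟩
      rw [Finset.mem_range, Nat.lt_succ_iff]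
      show Nat.log 2 (q / r) ≤ Q
      exact (Nat.log_le_self _ _).trans ((Nat.div_le_self _ _).trans hq.2))]
  have hdj : ∀ dj ∈ r.divisors ×ˢ Finset.range (Q + 1), (∑ q ∈ Finset.Ioc r Q with (q.gcd r, Nat.log 2 (q / r)) = dj,
      (if dnint (((q - r) / q.gcd r : ℕ) * γ) < 2 * (q / q.gcd r : ℕ) * ψ then
      2 * (q.gcd r : ℝ) * (C / (q ^ 2 * L ^ 2)) else 0)) ≤
      (2 * dj.1 * C / (4 ^ dj.2 * r ^ 2 * L ^ 2)) *
      (Ncount γ (2 ^ (dj.2 + 1) * (r / dj.1)) (2 * (2 ^ (dj.2 + 1) * (r / dj.1) : ℕ) * ψ) : ℝ) := by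
    rintro ⟨d, j⟩ hdj
    simp only
    rw [Finset.mem_product] at hdj
    have hd := hdj.1
    simp only at hd
    have hd0 : 0 < d := Nat.pos_of_mem_divisors hd
    have hdR : (0:ℝ) < d := by exact_mod_cast hd0
    have hdvd : d ∣ r := (Nat.mem_divisors.1 hd).1
    have hprop : ∀ q ∈ (Finset.Ioc r Q).filter (fun q => (q.gcd r, Nat.log 2 (q / r)) = (d, j)),
        q.gcd r = d ∧ d ∣ q ∧ r < q ∧ 2 ^ j * r ≤ q ∧ q < 2 ^ (j + 1) * r := by
      intro q hq
      rw [Finset.mem_filter, Finset.mem_Ioc, Prod.mk.injEq] at hq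
      obtain ⟨⟨h1, h2⟩, h3, h4⟩ := hq
      have hne : q / r ≠ 0 := (Nat.div_pos h1.le hr0).ne'
      refine ⟨h3, h3 ▸ Nat.gcd_dvd_left _ _, h1, ?_, ?_⟩
      · have := Nat.pow_log_le_self 2 hne
        rw [h4] at this
        exact (Nat.le_div_iff_mul_le hr0).1 this
      · have := Nat.lt_pow_succ_log_self (b := 2) (by norm_num) (q / r)
        rw [h4] at this
        exact (Nat.div_lt_iff_lt_mul hr0).1 this
    set M := 2 ^ (j + 1) * (r / d) with hM
    have hMd : M * d = 2 ^ (j + 1) * r := by rw [hM, mul_assoc, Nat.div_mul_cancel hdvd]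
    have e1 : ∀ q ∈ (Finset.Ioc r Q).filter (fun q => (q.gcd r, Nat.log 2 (q / r)) = (d, j)),
      (if dnint (((q - r) / q.gcd r : ℕ) * γ) < 2 * (q / q.gcd r : ℕ) * ψ then
      2 * (q.gcd r : ℝ) * (C / (q ^ 2 * L ^ 2)) else 0) ≤
      (if dnint (((q - r) / d : ℕ) * γ) < 2 * (M : ℝ) * ψ then 2 * d * C / (4 ^ j * r ^ 2 * L ^ 2) else 0) := by
      intro q hq
      obtain ⟨h1, h2, h3, h4, h5⟩ := hprop q hq
      rw [h1]
      have hqR : (0:ℝ) < q := by exact_mod_cast (show 0 < q by omega)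
      split_ifs with ha hb hb
      · have h6 : (2:ℝ) ^ j * r ≤ q := by exact_mod_cast h4
        have h7 : (4:ℝ) ^ j * r ^ 2 ≤ q ^ 2 := by
          calc (4:ℝ) ^ j * r ^ 2 = (2 ^ j * r) ^ 2 := by
                rw [mul_pow, ← pow_mul, mul_comm j 2, pow_mul]; norm_num
            _ ≤ (q:ℝ) ^ 2 := by gcongr
        rw [← mul_div_assoc]
        gcongr
      · exfalso
        apply hb
        refine ha.trans_le ?_
        have : q / d ≤ M := by
          apply Nat.div_le_of_le_mul
          rw [mul_comm, hMd]; exact h5.le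
        have : ((q / d : ℕ) : ℝ) ≤ M := by exact_mod_cast this
        gcongr
      · positivity
      · exact le_rfl
    refine (Finset.sum_le_sum e1).trans ?_
    rw [← Finset.sum_filter, Finset.sum_const, nsmul_eq_mul, mul_comm]
    refine mul_le_mul_of_nonneg_left ?_ (by positivity)
    norm_cast
    unfold Ncount
    apply Finset.card_le_card_of_injOn (fun q => (q - r) / d)
    · intro q hq
      rw [Finset.mem_coe, Finset.mem_filter] at hq
      obtain ⟨h1, h2, h3, h4, h5⟩ := hprop q hq.1
      have hdr : d ∣ q - r := Nat.dvd_sub h2 hdvd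
      rw [Finset.mem_coe, Finset.mem_filter, Finset.mem_Icc]
      refine ⟨⟨Nat.div_pos (Nat.le_of_dvd (by omega) hdr) hd0, ?_⟩, ?_⟩
      · apply Nat.div_le_of_le_mul
        rw [mul_comm, hMd]; omega
      · exact_mod_cast hq.2
    · intro q hq l hl hql
      rw [Finset.mem_coe, Finset.mem_filter] at hq hl
      obtain ⟨h1, h2, h3, h4, h5⟩ := hprop q hq.1
      obtain ⟨g1, g2, g3, g4, g5⟩ := hprop l hl.1
      have := Nat.div_left_inj (Nat.dvd_sub h2 hdvd) (Nat.dvd_sub g2 hdvd) |>.1 hql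
      omega
  refine (Finset.sum_le_sum hdj).trans ?_
  rw [Finset.sum_product]
  refine (Finset.sum_le_sum (fun d hd => T1_inner h hC hψ d hd (Q + 1))).trans ?_
  rw [← Finset.mul_sum, Finset.sum_add_distrib, ← Finset.mul_sum, Finset.sum_const, nsmul_eq_mul]
  have h1 := divsum h.x2 h.Ldef hL1 h.tau
  calc _ ≤ C * ψ / L ^ 2 * (64 * (120 * L ^ 2) + x ^ 4 * (48 / x ^ 4)) := by
        gcongr
        exact h.tau
    _ = C * ψ / L ^ 2 * (64 * (120 * L ^ 2) + 48 * 1) := by field_simp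
    _ ≤ C * ψ / L ^ 2 * (64 * (120 * L ^ 2) + 48 * L ^ 2) := by gcongr; nlinarith
    _ = (7728 * C) * ψ := by field_simp; ring

open scoped Classical in
noncomputable def tt2 (γ ψ : ℝ) (q r : ℕ) : ℝ :=
  if dnint (((q - r) / q.gcd r : ℕ) * γ) < 2 * (q / q.gcd r : ℕ) * ψ then
      2 * (q.gcd r : ℝ) * (ψ / q) else 0

open scoped Classical in
noncomputable def tt1 (γ C ψ L : ℝ) (q r : ℕ) : ℝ :=
  if dnint (((q - r) / q.gcd r : ℕ) * γ) < 2 * (q / q.gcd r : ℕ) * ψ then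
      2 * (q.gcd r : ℝ) * (C / (q ^ 2 * L ^ 2)) else 0

lemma tt2_nonneg (γ ψ : ℝ) (hψ : 0 ≤ ψ) (q r : ℕ) : 0 ≤ tt2 γ ψ q r := by
  unfold tt2; split_ifs <;> positivity

lemma tt1_nonneg (γ C ψ L : ℝ) (hC : 0 < C) (q r : ℕ) : 0 ≤ tt1 γ C ψ L q r := by
  unfold tt1; split_ifs <;> positivity

lemma pair_bound {γ C ψq ψr : ℝ} {q r : ℕ} {xq Lq xr Lr : ℝ} (hq : Good γ C ψq q xq Lq)
    (hr : Good γ C ψr r xr Lr) (hC : 0 < C) (h0q : 0 ≤ ψq) (h0r : 0 ≤ ψr) (h2 : ψq < 1/2)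
    (hrq : r < q) :
    volume.real (Bset γ ψq q ∩ Bset γ ψr r) ≤ 4 * ψq * ψr + tt1 γ C ψr Lr q r + tt2 γ ψq q r := by
  have hr1 := hr.rpos
  have n1 := tt1_nonneg γ C ψr Lr hC q r
  have n2 := tt2_nonneg γ ψq h0q q r
  have n3 : 0 ≤ 4 * ψq * ψr := by positivity
  have hd : 0 < q.gcd r := Nat.gcd_pos_of_pos_right _ hr1
  obtain ⟨q', hq'⟩ := Nat.gcd_dvd_left q r
  obtain ⟨r', hr'⟩ := Nat.gcd_dvd_right q r
  have hle : r' < q' := by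
    have : q.gcd r * r' < q.gcd r * q' := by rw [← hq', ← hr']; exact hrq
    exact lt_of_mul_lt_mul_left this (Nat.zero_le _)
  have e1 : q / q.gcd r = q' := Nat.div_eq_of_eq_mul_right hd hq'
  have e2 : (q - r) / q.gcd r = q' - r' := by
    apply Nat.div_eq_of_eq_mul_right hd
    rw [Nat.mul_sub, ← hq', ← hr']
  by_cases hc : r' * ψq + q' * ψr ≤ dnint (((q' - r' : ℕ) : ℝ) * γ)
  · have := inter_empty γ ψq ψr (q.gcd r) q' r' hle.le hd (by omega) hc
    rw [← hq', ← hr'] at this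
    rw [this]; simp; linarith
  push Not at hc
  have ib := inter_bound γ ψr ψq h0r h0q h2 r q (by omega)
  rw [Set.inter_comm, Nat.gcd_comm] at ib
  have hqR : (0:ℝ) < q := by exact_mod_cast (by omega : 0 < q)
  have hle' : (r':ℝ) ≤ q' := by exact_mod_cast hle.le
  by_cases hs : dnint (((q' - r' : ℕ) : ℝ) * γ) < 2 * (q' : ℕ) * ψq
  · have : tt2 γ ψq q r = 2 * (q.gcd r : ℝ) * (ψq / q) := by
      unfold tt2; rw [e1, e2, if_pos hs]
    linarith
  · have hs2 : dnint (((q' - r' : ℕ) : ℝ) * γ) < 2 * (q' : ℕ) * ψr := by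
      have : (r':ℝ) * ψq ≤ q' * ψq := by gcongr
      linarith
    have : tt1 γ C ψr Lr q r = 2 * (q.gcd r : ℝ) * (C / (q ^ 2 * Lr ^ 2)) := by
      unfold tt1; rw [e1, e2, if_pos hs2]
    have hL : Lr ≤ Lq := by
      rw [hr.Ldef, hq.Ldef]
      have hx : xr ≤ xq := by
        rw [hr.xdef, hq.xdef]
        exact Real.logb_le_logb_of_le (by norm_num) (by exact_mod_cast hr1) (by exact_mod_cast hrq.le)
      exact Real.logb_le_logb_of_le (by norm_num) (by linarith [hr.x2]) hx
    have hL1 := hr.L1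
    have : ψq / q ≤ C / (q ^ 2 * Lr ^ 2) := by
      calc ψq / q ≤ (C / (q * Lr ^ 2)) / q := by
            gcongr
            refine hq.up.trans ?_
            gcongr
        _ = _ := by field_simp
    have : 2 * (q.gcd r : ℝ) * (ψq / q) ≤ 2 * (q.gcd r : ℝ) * (C / (q ^ 2 * Lr ^ 2)) := by gcongr
    linarith

lemma sum_tau_le (N : ℕ) :
    ∑ q ∈ Finset.Icc 1 N, (q.divisors.card : ℝ) ≤ N * (1 + Real.log N) := by
  classical
  have h1 : ∀ q ∈ Finset.Icc 1 N, (q.divisors.card : ℝ) = ∑ d ∈ Finset.Icc 1 N, if d ∣ q then (1:ℝ) else 0 := by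
    intro q hq
    rw [Finset.mem_Icc] at hq
    rw [Finset.sum_boole]
    congr 2
    ext d
    simp only [Nat.mem_divisors, Finset.mem_filter, Finset.mem_Icc]
    constructor
    · rintro ⟨h, h0⟩
      have := Nat.le_of_dvd (by omega) h
      have := Nat.pos_of_dvd_of_pos h (by omega)
      exact ⟨by omega, h⟩
    · rintro ⟨_, h⟩; exact ⟨h, by omega⟩
  rw [Finset.sum_congr rfl h1, Finset.sum_comm]
  have h2 : ∀ d ∈ Finset.Icc 1 N, (∑ q ∈ Finset.Icc 1 N, if d ∣ q then (1:ℝ) else 0) ≤ N * (d:ℝ)⁻¹ := by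
    intro d hd
    rw [Finset.sum_boole]
    have : (Finset.Icc 1 N).filter (d ∣ ·) = (Finset.Ioc 0 N).filter (d ∣ ·) := rfl
    rw [this, Nat.Ioc_filter_dvd_card_eq_div]
    exact Nat.cast_div_le.trans (by rw [div_eq_mul_inv])
  refine (Finset.sum_le_sum h2).trans ?_
  rw [← Finset.mul_sum]
  gcongr
  have := harmonic_le_one_add_log N
  rw [harmonic_eq_sum_Icc] at this
  push_cast at this
  exact this


noncomputable def aa (C : ℝ) (q : ℕ) : ℝ :=
  1 / (q * (Real.logb 2 q) ^ 2) + C * (q.divisors.card / (q * (Real.logb 2 q) ^ 4))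

lemma aa_nonneg (C : ℝ) (hC : 0 < C) (q : ℕ) : 0 ≤ aa C q := by
  unfold aa; positivity

lemma aa_block (C : ℝ) (hC : 0 < C) (k : ℕ) (hk : 1 ≤ k) :
    ∑ q ∈ Finset.Ico (2 ^ k) (2 ^ (k + 1)), aa C q ≤ (1 + 6 * C) * (1 / (k:ℝ) ^ 2) := by
  have hkR : (1:ℝ) ≤ k := by exact_mod_cast hk
  have h1 : ∀ q ∈ Finset.Ico (2 ^ k) (2 ^ (k + 1)), aa C q ≤
      1 / (2 ^ k * (k:ℝ) ^ 2) + C / (2 ^ k * (k:ℝ) ^ 4) * q.divisors.card := by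
    intro q hq
    rw [Finset.mem_Ico] at hq
    have hq1 : (2:ℝ) ^ k ≤ q := by exact_mod_cast hq.1
    have h2k : (0:ℝ) < 2 ^ k := by positivity
    have hx : (k:ℝ) ≤ Real.logb 2 q := by
      rw [Real.le_logb_iff_rpow_le (by norm_num) (by linarith), Real.rpow_natCast]
      exact hq1
    unfold aa
    rw [div_mul_eq_mul_div, mul_div_assoc]
    gcongr
  refine (Finset.sum_le_sum h1).trans ?_
  rw [Finset.sum_add_distrib, ← Finset.mul_sum, Finset.sum_const, Nat.card_Ico, nsmul_eq_mul]
  have hc : ((2 ^ (k + 1) - 2 ^ k : ℕ) : ℝ) = 2 ^ k := by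
    rw [pow_succ, show 2 ^ k * 2 - 2 ^ k = 2 ^ k by omega]; push_cast; rfl
  rw [hc]
  have h2 : ∑ q ∈ Finset.Ico (2 ^ k) (2 ^ (k + 1)), (q.divisors.card : ℝ) ≤ 2 ^ (k + 1) * (3 * k) := by
    calc _ ≤ ∑ q ∈ Finset.Icc 1 (2 ^ (k + 1)), (q.divisors.card : ℝ) := by
          apply Finset.sum_le_sum_of_subset_of_nonneg
          · intro q hq
            rw [Finset.mem_Ico] at hq
            have := Nat.one_le_two_pow (n := k)
            exact Finset.mem_Icc.2 ⟨by omega, by omega⟩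
          · intros; positivity
      _ ≤ _ := sum_tau_le _
      _ ≤ _ := by
          push_cast
          gcongr
          rw [Real.log_pow]
          push_cast
          nlinarith [Real.log_two_lt_d9, Real.log_two_gt_d9]
  calc _ ≤ (2:ℝ) ^ k * (1 / (2 ^ k * (k:ℝ) ^ 2)) + C / (2 ^ k * (k:ℝ) ^ 4) * (2 ^ (k + 1) * (3 * k)) := by gcongr
    _ = 1 / (k:ℝ) ^ 2 + 6 * C * (1 / (k:ℝ) ^ 3) := by rw [pow_succ]; field_simp; ring
    _ ≤ 1 / (k:ℝ) ^ 2 + 6 * C * (1 / (k:ℝ) ^ 2) := by gcongr; norm_num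
    _ = _ := by ring

lemma aa_bdd (C : ℝ) (hC : 0 < C) : ∃ B : ℝ, ∀ Q : ℕ, ∑ q ∈ Finset.Icc 1 Q, aa C q ≤ B := by
  have hs : Summable (fun k : ℕ => 1 / (k:ℝ) ^ 2) := Real.summable_one_div_nat_pow.2 (by norm_num)
  refine ⟨aa C 1 + (1 + 6 * C) * ∑' k : ℕ, 1 / (k:ℝ) ^ 2, fun Q => ?_⟩
  have key : ∀ K : ℕ, ∑ q ∈ Finset.Ico 1 (2 ^ (K + 1)), aa C q ≤
      aa C 1 + (1 + 6 * C) * ∑ k ∈ Finset.range (K + 1), 1 / (k:ℝ) ^ 2 := by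
    intro K
    induction K with
    | zero => simp
    | succ n ih =>
      rw [← Finset.sum_Ico_consecutive _ (Nat.one_le_two_pow (n := n + 1))
        (Nat.pow_le_pow_right (by norm_num) (Nat.le_succ _)), Finset.sum_range_succ]
      have := aa_block C hC (n + 1) (by omega)
      linarith
  calc _ ≤ ∑ q ∈ Finset.Ico 1 (2 ^ (Q + 1)), aa C q := by
        apply Finset.sum_le_sum_of_subset_of_nonneg
        · intro q hq
          rw [Finset.mem_Icc] at hq
          have := Nat.lt_two_pow_self (n := Q + 1)
          exact Finset.mem_Ico.2 ⟨by omega, by omega⟩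
        · intros; exact aa_nonneg C hC _
    _ ≤ _ := key Q
    _ ≤ _ := by
        gcongr
        exact hs.sum_le_tsum _ (fun _ _ => by positivity)

open scoped Classical in
noncomputable def psit (γ C : ℝ) (ψ : ℕ → ℝ) (q : ℕ) : ℝ :=
  if Good γ C (ψ q) q (Real.logb 2 q) (Real.logb 2 (Real.logb 2 q)) then ψ q else 0

lemma psi_le (γ C : ℝ) (hC : 0 < C) (hγ : Irrational γ) (ht : TamelyLiouville γ) (ψ : ℕ → ℝ)
    (hψ0 : ∀ q, 0 ≤ ψ q)
    (hO : ∀ q : ℕ, 3 ≤ q → ψ q ≤ C / ((q : ℝ) * (Real.logb 2 (Real.logb 2 q)) ^ 2)) :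
    ∃ q1 : ℕ, ∀ q, q1 ≤ q → ψ q ≤ psit γ C ψ q + aa C q := by
  obtain ⟨r0, hr0⟩ := N_final γ C hγ ht
  refine ⟨max r0 256, fun q hq => ?_⟩
  have hq1 : r0 ≤ q := le_trans (le_max_left _ _) hq
  have hq2 : 256 ≤ q := le_trans (le_max_right _ _) hq
  have hqR : (256:ℝ) ≤ q := by exact_mod_cast hq2
  have hqp : (0:ℝ) < q := by linarith
  have ha := aa_nonneg C hC q
  unfold psit
  split_ifs with hg
  · linarith
  rw [zero_add]
  by_contra! hlt
  apply hg
  set x := Real.logb 2 q with hx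
  have hx2 : 2 ≤ x := by
    rw [hx, Real.le_logb_iff_rpow_le (by norm_num) (by linarith)]
    norm_num; linarith
  have hL1 : 1 ≤ Real.logb 2 x := by
    rw [Real.le_logb_iff_rpow_le (by norm_num) (by linarith)]
    simpa using hx2
  have hup := hO q (by omega)
  have hup2 : ψ q ≤ C / q := by
    refine hup.trans ?_
    gcongr
    nlinarith [one_le_pow₀ hL1 (n := 2)]
  have haa : aa C q = 1 / (q * x ^ 2) + C * (q.divisors.card / (q * x ^ 4)) := rfl
  have p1 : 0 ≤ 1 / (q * x ^ 2) := by positivity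
  have p2 : 0 ≤ C * (q.divisors.card / (q * x ^ 4)) := by positivity
  refine ⟨by omega, rfl, rfl, hx2, ?_, hup, by linarith, ?_, ?_⟩
  · have hs := Real.sq_sqrt hqp.le
    have hsp : 0 < Real.sqrt q := Real.sqrt_pos.2 hqp
    have h4 : x ≤ 4 * Real.sqrt q := by
      have : x = 2 * Real.logb 2 (Real.sqrt q) := by
        rw [hx]; nth_rewrite 1 [← hs]
        rw [Real.logb_pow]; norm_num
      have := logb_two_le _ hsp
      linarith
    have : x ^ 2 ≤ 16 * q := by
      calc x ^ 2 ≤ (4 * Real.sqrt q) ^ 2 := by gcongr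
        _ = _ := by rw [mul_pow, hs]; norm_num
    nlinarith
  · by_contra! hc
    have : C / q ≤ C * (q.divisors.card / (q * x ^ 4)) := by
      rw [div_eq_mul_one_div]
      refine mul_le_mul_of_nonneg_left ?_ hC.le
      rw [div_le_div_iff₀ hqp (by positivity)]
      nlinarith
    linarith
  · intro M h1 h3
    exact hr0 q hq1 M h1 h3 (ψ q) (hψ0 q) hup2

lemma psit_div (γ C : ℝ) (hC : 0 < C) (hγ : Irrational γ) (ht : TamelyLiouville γ) (ψ : ℕ → ℝ)
    (hψ0 : ∀ q, 0 ≤ ψ q)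
    (hO : ∀ q : ℕ, 3 ≤ q → ψ q ≤ C / ((q : ℝ) * (Real.logb 2 (Real.logb 2 q)) ^ 2))
    (hdiv : Tendsto (fun Q : ℕ => ∑ q ∈ Finset.Icc 1 Q, ψ q) atTop atTop) :
    Tendsto (fun Q : ℕ => ∑ q ∈ Finset.Icc 1 Q, 2 * psit γ C ψ q) atTop atTop := by
  obtain ⟨q1, hq1⟩ := psi_le γ C hC hγ ht ψ hψ0 hO
  obtain ⟨B, hB⟩ := aa_bdd C hC
  have p0 : ∀ q, 0 ≤ psit γ C ψ q := by
    intro q; unfold psit; split_ifs; exacts [hψ0 q, le_rfl]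
  have hd2 := tendsto_atTop_add_const_right atTop (-(∑ q ∈ Finset.range q1, ψ q) - B) hdiv
  refine tendsto_atTop_mono (fun Q => ?_) hd2
  have h1 : ∀ q ∈ Finset.Icc 1 Q, ψ q ≤ 2 * psit γ C ψ q + aa C q + (if q ∈ Finset.range q1 then ψ q else 0) := by
    intro q _
    have := p0 q
    split_ifs with h
    · linarith [aa_nonneg C hC q]
    · rw [Finset.mem_range] at h
      linarith [hq1 q (by omega)]
  have h2 := Finset.sum_le_sum h1
  rw [Finset.sum_add_distrib, Finset.sum_add_distrib, ← Finset.sum_filter] at h2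
  have h3 : ∑ q ∈ Finset.Icc 1 Q with q ∈ Finset.range q1, ψ q ≤ ∑ q ∈ Finset.range q1, ψ q := by
    apply Finset.sum_le_sum_of_subset_of_nonneg
    · intro q hq; exact (Finset.mem_filter.1 hq).2
    · intros; exact hψ0 _
  linarith [hB Q]


lemma Bset_nonpos (γ : ℝ) (q : ℕ) : Bset γ 0 q = ∅ := by
  rw [Set.eq_empty_iff_forall_notMem]
  intro x hx
  exact absurd hx (not_lt.2 (norm_nonneg _))

lemma main_var (γ C : ℝ) (hC : 0 < C) (ψ : ℕ → ℝ) (hψ0 : ∀ q, 0 ≤ ψ q)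
    (hψhalf : ∀ q, 1 ≤ q → ψ q < 1/2) (Q : ℕ) :
    ∑ q ∈ Finset.Icc 1 Q, ∑ r ∈ Finset.Icc 1 Q,
      volume.real (Bset γ (psit γ C ψ q) q ∩ Bset γ (psit γ C ψ r) r) ≤
    (∑ q ∈ Finset.Icc 1 Q, 2 * psit γ C ψ q) ^ 2 +
      (1 + (1920 * C + 12) + 7728 * C) * ∑ q ∈ Finset.Icc 1 Q, 2 * psit γ C ψ q := by
  classical
  set p := psit γ C ψ with hp
  let G : ℕ → Prop := fun q => Good γ C (ψ q) q (Real.logb 2 q) (Real.logb 2 (Real.logb 2 q))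
  have pG : ∀ q, G q → p q = ψ q := fun q h => by rw [hp]; unfold psit; exact if_pos h
  have pN : ∀ q, ¬ G q → p q = 0 := fun q h => by rw [hp]; unfold psit; exact if_neg h
  have p0 : ∀ q, 0 ≤ p q := by
    intro q; by_cases h : G q
    · rw [pG q h]; exact hψ0 q
    · rw [pN q h]
  have ph : ∀ q, 1 ≤ q → p q < 1/2 := by
    intro q hq; by_cases h : G q
    · rw [pG q h]; exact hψhalf q hq
    · rw [pN q h]; norm_num
  let E1 : ℕ → ℕ → ℝ := fun q r =>
    if r < q then (if G r then tt1 γ C (ψ r) (Real.logb 2 (Real.logb 2 r)) q r else 0) else 0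
  let E2 : ℕ → ℕ → ℝ := fun q r => if r < q then (if G q then tt2 γ (ψ q) q r else 0) else 0
  have E1n : ∀ q r, 0 ≤ E1 q r := by
    intro q r; simp only [E1]; split_ifs
    exacts [tt1_nonneg _ _ _ _ hC _ _, le_rfl, le_rfl]
  have E2n : ∀ q r, 0 ≤ E2 q r := by
    intro q r; simp only [E2]; split_ifs
    exacts [tt2_nonneg _ _ (hψ0 q) _ _, le_rfl, le_rfl]
  have lt_case : ∀ q r, r < q → 1 ≤ r → volume.real (Bset γ (p q) q ∩ Bset γ (p r) r) ≤
      (2 * p q) * (2 * p r) + (E1 q r + E2 q r) := by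
    intro q r hrq hr
    have hpp := mul_nonneg (p0 q) (p0 r)
    by_cases hq : G q
    · by_cases hr' : G r
      · have := pair_bound hq hr' hC (hψ0 q) (hψ0 r) (hψhalf q (by omega)) hrq
        simp only [E1, E2, if_pos hrq, if_pos hq, if_pos hr']
        rw [pG q hq, pG r hr']
        linarith
      · rw [pN r hr', Bset_nonpos]; simp; linarith [E1n q r, E2n q r]
    · rw [pN q hq, Bset_nonpos]; simp; linarith [E1n q r, E2n q r]
  have pt : ∀ q ∈ Finset.Icc 1 Q, ∀ r ∈ Finset.Icc 1 Q,
      volume.real (Bset γ (p q) q ∩ Bset γ (p r) r) ≤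
      (2 * p q) * (2 * p r) + (if q = r then 2 * p q else 0) +
        ((E1 q r + E2 q r) + (E1 r q + E2 r q)) := by
    intro q hq r hr
    rw [Finset.mem_Icc] at hq hr
    have a1 := E1n q r
    have a2 := E2n q r
    have a3 := E1n r q
    have a4 := E2n r q
    rcases lt_trichotomy q r with h | h | h
    · rw [if_neg h.ne, Set.inter_comm]
      linarith [lt_case r q h hq.1]
    · subst h
      rw [if_pos rfl, Set.inter_self]
      have : volume.real (Bset γ (p q) q) = 2 * p q := by
        rw [measureReal_def, Bset_vol γ _ (p0 q) (ph q hq.1) q (by omega), ENNReal.toReal_ofReal]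
        linarith [p0 q]
      rw [this]
      nlinarith [p0 q]
    · rw [if_neg h.ne']
      linarith [lt_case q r h hr.1]
  have s1 : ∑ q ∈ Finset.Icc 1 Q, ∑ r ∈ Finset.Icc 1 Q, E2 q r ≤
      ∑ q ∈ Finset.Icc 1 Q, (1920 * C + 12) * p q := by
    apply Finset.sum_le_sum
    intro q hq
    rw [Finset.mem_Icc] at hq
    by_cases h : G q
    · have := T2_bound h hC (hψ0 q)
      rw [pG q h]
      refine le_trans (le_of_eq ?_) this
      simp only [E2, if_pos h]
      rw [← Finset.sum_filter]
      apply Finset.sum_congr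
      · ext r; simp only [Finset.mem_filter, Finset.mem_Icc, Finset.mem_Ico]; omega
      · intro r _; rfl
    · simp [E2, h, pN q h]
  have s2 : ∑ q ∈ Finset.Icc 1 Q, ∑ r ∈ Finset.Icc 1 Q, E1 q r ≤
      ∑ r ∈ Finset.Icc 1 Q, (7728 * C) * p r := by
    rw [Finset.sum_comm]
    apply Finset.sum_le_sum
    intro r hr
    rw [Finset.mem_Icc] at hr
    by_cases h : G r
    · have := T1_bound h hC (hψ0 r) Q
      rw [pG r h]
      refine le_trans (le_of_eq ?_) this
      simp only [E1, if_pos h]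
      rw [← Finset.sum_filter]
      apply Finset.sum_congr
      · ext q; simp only [Finset.mem_filter, Finset.mem_Icc, Finset.mem_Ioc]; omega
      · intro q _; rfl
    · simp [E1, h, pN r h]
  have s3 : ∑ q ∈ Finset.Icc 1 Q, ∑ r ∈ Finset.Icc 1 Q, E2 r q ≤
      ∑ q ∈ Finset.Icc 1 Q, (1920 * C + 12) * p q := by
    rw [Finset.sum_comm]; exact s1
  have s4 : ∑ q ∈ Finset.Icc 1 Q, ∑ r ∈ Finset.Icc 1 Q, E1 r q ≤
      ∑ r ∈ Finset.Icc 1 Q, (7728 * C) * p r := by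
    rw [Finset.sum_comm]; exact s2
  have s5 : ∑ q ∈ Finset.Icc 1 Q, ∑ r ∈ Finset.Icc 1 Q, (if q = r then 2 * p q else 0) =
      ∑ q ∈ Finset.Icc 1 Q, 2 * p q := by
    apply Finset.sum_congr rfl
    intro q hq
    rw [Finset.sum_ite_eq, if_pos hq]
  have := Finset.sum_le_sum (fun q hq => Finset.sum_le_sum (pt q hq))
  refine this.trans ?_
  simp only [Finset.sum_add_distrib]
  rw [s5]
  have s6 : ∑ q ∈ Finset.Icc 1 Q, ∑ r ∈ Finset.Icc 1 Q, 2 * p q * (2 * p r) =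
      (∑ q ∈ Finset.Icc 1 Q, 2 * p q) ^ 2 := by
    rw [sq, Finset.sum_mul_sum]
  rw [s6]
  rw [← Finset.mul_sum] at s1 s2 s3 s4 ⊢
  linarith

theorem stmt0 (ψ : ℕ → ℝ) (hψ0 : ∀ q, 0 ≤ ψ q)
    (hψhalf : ∀ q, 1 ≤ q → ψ q < 1/2)
    (hO : ∃ C > (0:ℝ), ∀ q : ℕ, 3 ≤ q →
      ψ q ≤ C / ((q : ℝ) * (Real.logb 2 (Real.logb 2 q)) ^ 2))
    (hdiv : Tendsto (fun Q : ℕ => ∑ q ∈ Finset.Icc 1 Q, ψ q) atTop atTop)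
    (γ : ℝ) (hγ : Irrational γ) (htame : TamelyLiouville γ) :
    volume (W ψ γ) = 1 := by
  obtain ⟨C, hC, hO⟩ := hO
  have p0 : ∀ q, 0 ≤ psit γ C ψ q := by
    intro q; unfold psit; split_ifs; exacts [hψ0 q, le_rfl]
  have ple : ∀ q, psit γ C ψ q ≤ ψ q := by
    intro q; unfold psit; split_ifs; exacts [le_rfl, hψ0 q]
  have hv : ∀ Q : ℕ, ∑ q ∈ Finset.Icc 1 Q, volume.real (Bset γ (psit γ C ψ q) q) =
      ∑ q ∈ Finset.Icc 1 Q, 2 * psit γ C ψ q := by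
    intro Q
    apply Finset.sum_congr rfl
    intro q hq
    rw [Finset.mem_Icc] at hq
    rw [measureReal_def, Bset_vol γ _ (p0 q) ((ple q).trans_lt (hψhalf q hq.1)) q (by omega),
      ENNReal.toReal_ofReal]
    linarith [p0 q]
  have : IsProbabilityMeasure (volume : Measure UnitAddCircle) := ⟨UnitAddCircle.measure_univ⟩
  have hae := bc_variance (volume : Measure UnitAddCircle) (fun q => Bset γ (psit γ C ψ q) q)
    (fun q => Bset_meas γ _ q) (1 + (1920 * C + 12) + 7728 * C)
    (by
      intro Q
      rw [hv Q]
      exact main_var γ C hC ψ hψ0 hψhalf Q)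
    (by
      simp only [hv]
      exact psit_div γ C hC hγ htame ψ hψ0 hO hdiv)
  apply W_full_of_ae
  filter_upwards [hae] with x hx
  refine hx.mono ?_
  rintro q ⟨h1, h2⟩
  exact ⟨h1, lt_of_lt_of_le h2 (ple q)⟩
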